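/- arXiv:2104.03260 — 2 statements merged into one kernel-verified Lean document; each statement's English description precedes it below -/
import Mathlib

section
/- For every ε > 0 there exists K such that for all k ≥ K and all integers n ≥ 2k + 100·ln k, the number of non-trivial intersecting families of k-element subsets of [n] is at most ε · 2^{\binom{n-1}{k-1}}. In particular, since the number of trivial intersecting families is at least 2^{\binom{n-1}{k-1}}, almost all intersecting families in \binom{[n]}{k} are trivial. -/
/-!
Write `N = C(n - 1, k - 1)` for the size of a star. An intersecting family `F` is an independent set
of the Kneser graph. A fingerprint `T ⊆ F`, maximal subject to having many neighbours in proportion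
to its size, is small, and it determines a container of `F` whose members are each disjoint from few
others. If the container is noticeably smaller than `N`, there are so few choices of `T` that such
families number at most `2 ^ N / 2 ^ n`.

Otherwise Katona's cycle method is stable: in most cyclic orders of the ground set, exactly `k` arcs
of length `k` lie in the container. Comparing cyclic orders which differ by a transposition of
adjacent points gives a pair `x`, `y` such that for almost every `(k - 1)`-set `R` the container has
`insert x R` as a member but not `insert y R`. A member avoiding `x` would be disjoint from many of
the sets `insert x R`, so almost no member avoids `x`.

Finally, let `F` be nearly a star at `x`, with some members avoiding `x`. Call a `(k - 1)`-set `w`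
blocked if it is disjoint from such a member; then `insert x w` is absent from `F`. A fingerprint,
now of larger sets all of whose `(k - 1)`-subsets are blocked, yields a family `G` of blocked sets
which nearly determines them. Double counting and the Kruskal–Katona theorem in Lovász's form bound
the number of candidates for members avoiding `x` by `#G` with a factor below `1`, so the star loses
more than is gained outside it. This leaves at most `3 * 2 ^ N / 2 ^ n` families for each `x`.
-/

section Containers
open Finset

variable {β γ : Type*}

theorem exists_container [DecidableEq γ] (nb : β → Finset γ) (F : Finset β) {ψ : ℕ} (hψ : 0 < ψ) :
    ∃ T ⊆ F, #T * ψ ≤ #(T.biUnion nb) ∧ ∀ v ∈ F, #(nb v \ T.biUnion nb) < ψ := by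
  classical
  obtain ⟨T, hT, hmax⟩ := (F.powerset.filter fun T ↦ #T * ψ ≤ #(T.biUnion nb)).exists_max_image
    card ⟨∅, by simp⟩
  simp only [mem_filter, mem_powerset] at hT hmax
  refine ⟨T, hT.1, hT.2, fun v hv ↦ ?_⟩
  by_contra! hlarge
  have hvT : v ∉ T := fun hvT ↦ by
    rw [sdiff_eq_empty_iff_subset.2 (subset_biUnion_of_mem nb hvT), card_empty] at hlarge
    omega
  have hcard : #((insert v T).biUnion nb) = #(nb v \ T.biUnion nb) + #(T.biUnion nb) := by
    rw [biUnion_insert, ← sdiff_union_self_eq_union, card_union_of_disjoint sdiff_disjoint]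
  have hlarger := hmax (insert v T) ⟨insert_subset hv hT.1, by
    rw [hcard, card_insert_of_notMem hvT, add_one_mul]
    omega⟩
  rw [card_insert_of_notMem hvT] at hlarger
  omega

theorem card_filter_card_le_le_pow (U : Finset β) (b : ℕ) :
    #{T ∈ U.powerset | #T ≤ b} ≤ (#U + 1) ^ b := by
  classical
  have hcover : {T ∈ U.powerset | #T ≤ b} ⊆ (range (b + 1)).biUnion U.powersetCard := by
    intro T hT
    obtain ⟨hTU, hTb⟩ := mem_filter.1 hT
    exact mem_biUnion.2 ⟨#T, mem_range.2 (by omega), mem_powersetCard.2 ⟨mem_powerset.1 hTU, rfl⟩⟩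
  calc #{T ∈ U.powerset | #T ≤ b} ≤ ∑ i ∈ range (b + 1), #(U.powersetCard i) :=
        (card_le_card hcover).trans card_biUnion_le
    _ ≤ ∑ i ∈ range (b + 1), #U ^ i * 1 ^ (b - i) * b.choose i := by
        refine sum_le_sum fun i hi ↦ ?_
        rw [card_powersetCard, one_pow, mul_one]
        exact (Nat.choose_le_pow _ i).trans
          (Nat.le_mul_of_pos_right _ (Nat.choose_pos (Nat.le_of_lt_succ (mem_range.1 hi))))
    _ = (#U + 1) ^ b := (add_pow _ _ _).symm

theorem card_le_sum_two_pow_card (𝓕 : Finset (Finset β)) (𝒯 : Finset γ)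
    (C : γ → Finset β) (h : ∀ F ∈ 𝓕, ∃ T ∈ 𝒯, F ⊆ C T) : #𝓕 ≤ ∑ T ∈ 𝒯, 2 ^ #(C T) := by
  classical
  have hcover : 𝓕 ⊆ 𝒯.biUnion fun T ↦ (C T).powerset := fun F hF ↦ by
    obtain ⟨T, hT, hFT⟩ := h F hF
    exact mem_biUnion.2 ⟨T, hT, mem_powerset.2 hFT⟩
  calc #𝓕 ≤ ∑ T ∈ 𝒯, #(C T).powerset := (card_le_card hcover).trans card_biUnion_le
    _ = ∑ T ∈ 𝒯, 2 ^ #(C T) := by simp only [card_powerset]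

theorem card_mul_two_pow_le_of_card_fingerprint_le (𝓕 : Finset (Finset β)) (U : Finset γ)
    (C : Finset γ → Finset β) {n b N : ℕ} (hU : #U + 1 ≤ 2 ^ n)
    (h : ∀ F ∈ 𝓕, ∃ T ⊆ U, #T ≤ b ∧ F ⊆ C T ∧ #(C T) + n * b + n ≤ N) :
    #𝓕 * 2 ^ n ≤ 2 ^ N := by
  classical
  set 𝒯 := {T ∈ {T ∈ U.powerset | #T ≤ b} | #(C T) + n * b + n ≤ N}
  have hcover := card_le_sum_two_pow_card 𝓕 𝒯 C fun F hF ↦ by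
    obtain ⟨T, hTU, hTb, hFT, hC⟩ := h F hF
    exact ⟨T, by simp [𝒯, hTU, hTb, hC], hFT⟩
  have h𝒯 : #𝒯 ≤ 2 ^ (n * b) :=
    calc #𝒯 ≤ (#U + 1) ^ b := (card_filter_le _ _).trans (card_filter_card_le_le_pow U b)
      _ ≤ 2 ^ (n * b) := by rw [pow_mul]; gcongr
  refine Nat.le_of_mul_le_mul_right ?_ (show 0 < 2 ^ (n * b) by positivity)
  calc #𝓕 * 2 ^ n * 2 ^ (n * b) ≤ (∑ T ∈ 𝒯, 2 ^ #(C T)) * 2 ^ n * 2 ^ (n * b) := by gcongr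
    _ = ∑ T ∈ 𝒯, 2 ^ (#(C T) + n * b + n) := by
        simp only [sum_mul, pow_add]
        exact sum_congr rfl fun _ _ ↦ by ring
    _ ≤ #𝒯 * 2 ^ N := by
        rw [← smul_eq_mul]
        exact sum_le_card_nsmul _ _ _ fun T hT ↦
          Nat.pow_le_pow_right two_pos (mem_filter.1 hT).2
    _ ≤ 2 ^ N * 2 ^ (n * b) := by rw [mul_comm]; gcongr

theorem sum_pow_card_nonempty_le (U : Finset γ) {z : ℝ} (hz : 0 ≤ z)
    (hUz : #U * z ≤ 1) : ∑ T ∈ U.powerset with T.Nonempty, z ^ #T ≤ 2 * (#U * z) := by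
  classical
  have hUz0 : 0 ≤ #U * z := by positivity
  have hsplit : 1 + ∑ T ∈ U.powerset with T.Nonempty, z ^ #T = (z + 1) ^ #U := by
    have hsum := sum_pow_mul_eq_add_pow z 1 U
    rw [← sum_filter_add_sum_filter_not U.powerset Finset.Nonempty, filter_congr (q := (· = ∅))
      (fun T _ ↦ not_nonempty_iff_eq_empty), filter_eq' U.powerset ∅] at hsum
    simpa [add_comm] using hsum
  have hexp : (z + 1) ^ #U ≤ Real.exp (#U * z) := by
    rw [Real.exp_nat_mul]
    gcongr
    exact Real.add_one_le_exp z
  have hlin := Real.abs_exp_sub_one_le (abs_le.2 ⟨by linarith, hUz⟩)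
  rw [abs_of_nonneg hUz0] at hlin
  linarith [le_abs_self (Real.exp (#U * z) - 1)]

theorem card_mul_two_pow_le_of_fingerprint_nonempty (𝓕 : Finset (Finset β)) (U : Finset γ)
    (C : Finset γ → Finset β) {n N : ℕ} (hU : #U ≤ 2 ^ n)
    (h : ∀ F ∈ 𝓕, ∃ T ⊆ U, T.Nonempty ∧ F ⊆ C T ∧ #(C T) + 2 * n * #T ≤ N) :
    #𝓕 * 2 ^ n ≤ 2 * 2 ^ N := by
  classical
  set 𝒯 := {T ∈ {T ∈ U.powerset | T.Nonempty} | #(C T) + 2 * n * #T ≤ N}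
  have hcover := card_le_sum_two_pow_card 𝓕 𝒯 C fun F hF ↦ by
    obtain ⟨T, hTU, hT, hFT, hC⟩ := h F hF
    exact ⟨T, by simp [𝒯, hTU, hT, hC], hFT⟩
  set z : ℝ := (2 ^ (2 * n))⁻¹ with hz
  have hUz : #U * z * 2 ^ n ≤ 1 := by
    have hU' : (#U : ℝ) ≤ 2 ^ n := mod_cast hU
    rw [hz, two_mul, pow_add]
    field_simp
    exact hU'
  have hUz' : #U * z ≤ 1 :=
    (le_mul_of_one_le_right (by positivity) (one_le_pow₀ one_le_two)).trans hUz
  have hreal : (#𝓕 : ℝ) * 2 ^ n ≤ 2 * 2 ^ N :=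
    calc (#𝓕 : ℝ) * 2 ^ n ≤ (∑ T ∈ 𝒯, 2 ^ #(C T)) * 2 ^ n := by gcongr; exact_mod_cast hcover
      _ ≤ (∑ T ∈ 𝒯, 2 ^ N * z ^ #T) * 2 ^ n := by
          gcongr with T hT
          rw [hz, inv_pow, ← pow_mul, le_mul_inv_iff₀ (by positivity), ← pow_add]
          exact pow_le_pow_right₀ one_le_two (mem_filter.1 hT).2
      _ ≤ (∑ T ∈ U.powerset with T.Nonempty, 2 ^ N * z ^ #T) * 2 ^ n := by
          gcongr
          exact filter_subset _ _
      _ ≤ 2 ^ N * (2 * (#U * z)) * 2 ^ n := by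
          rw [← mul_sum]
          gcongr
          exact sum_pow_card_nonempty_le U (by positivity) hUz'
      _ = 2 * 2 ^ N * (#U * z * 2 ^ n) := by ring
      _ ≤ 2 * 2 ^ N := mul_le_of_le_one_right (by positivity) hUz
  exact_mod_cast hreal

end Containers

section Shadow
open Finset
open scoped FinsetFamily

variable {α : Type*} [DecidableEq α] {A : Finset (Finset α)}

theorem sum_card_memberSubfamily {c : ℕ} {W : Finset α} (hA : (A : Set (Finset α)).Sized c)
    (hW : ∀ S ∈ A, S ⊆ W) : ∑ v ∈ W, #(A.memberSubfamily v) = c * #A := by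
  have hlink (v : α) : #(A.memberSubfamily v) = #(A.bipartiteAbove (· ∈ ·) v) :=
    card_image_of_injOn fun S hS T hT ↦ by
      simp only [coe_filter] at hS hT
      exact erase_injOn' v hS.2 hT.2
  simp only [hlink, sum_card_bipartiteAbove_eq_sum_card_bipartiteBelow]
  rw [mul_comm, ← smul_eq_mul, sum_congr rfl, sum_const]
  intro S hS
  rw [bipartiteBelow, filter_mem_eq_inter, inter_eq_right.2 (hW S hS), hA hS]

theorem sized_memberSubfamily {r : ℕ} (hA : (A : Set (Finset α)).Sized (r + 1)) (v : α) :
    (A.memberSubfamily v : Set (Finset α)).Sized r := by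
  intro S hS
  obtain ⟨hS, hvS⟩ := mem_memberSubfamily.1 hS
  have hcard := hA hS
  rw [card_insert_of_notMem hvS] at hcard
  omega

theorem shadow_memberSubfamily_subset (A : Finset (Finset α)) (v : α) :
    ∂ (A.memberSubfamily v) ⊆ (∂ A).memberSubfamily v := by
  intro S hS
  obtain ⟨a, haS, ha⟩ := mem_shadow_iff_insert_mem.1 hS
  obtain ⟨hA, hv⟩ := mem_memberSubfamily.1 ha
  simp only [mem_insert, not_or] at hv
  refine mem_memberSubfamily.2 ⟨mem_shadow_iff_insert_mem.2 ⟨a, ?_, insert_comm v a S ▸ hA⟩, hv.2⟩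
  simp [haS, Ne.symm hv.1]

theorem card_memberSubfamily_add_card_memberSubfamily_shadow_le (A : Finset (Finset α)) (v : α) :
    #(A.memberSubfamily v) + #((∂ A).memberSubfamily v) ≤ #(∂ A) := by
  rw [← card_memberSubfamily_add_card_nonMemberSubfamily v (∂ A), add_comm]
  gcongr
  intro S hS
  obtain ⟨hS, hvS⟩ := mem_memberSubfamily.1 hS
  exact mem_nonMemberSubfamily.2 ⟨mem_shadow_iff_insert_mem.2 ⟨v, hvS, hS⟩, hvS⟩

-- A link whose shadow is large satisfies the inequality trivially, since the link itself embeds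
-- into the part of `∂ A` avoiding `v`.
theorem mul_card_le_mul_card_shadow_of_links {r x : ℕ} (hA : (A : Set (Finset α)).Sized (r + 2))
    (hcard : #(∂ A) ≤ (x + 1).choose (r + 1))
    (hlink : ∀ v, #((∂ A).memberSubfamily v) < x.choose r →
      (r + 1) * #(A.memberSubfamily v) ≤ (x - r) * #((∂ A).memberSubfamily v)) :
    (r + 2) * #A ≤ (x - r) * #(∂ A) := by
  have hlink' (v : α) :
      (r + 1) * #(A.memberSubfamily v) ≤ (x - r) * #((∂ A).memberSubfamily v) := by
    rcases lt_or_ge #((∂ A).memberSubfamily v) (x.choose r) with hv | hv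
    · exact hlink v hv
    have hsum := card_memberSubfamily_add_card_memberSubfamily_shadow_le A v
    rw [Nat.choose_succ_succ'] at hcard
    calc (r + 1) * #(A.memberSubfamily v) ≤ (r + 1) * x.choose (r + 1) := by gcongr; omega
      _ = (x - r) * x.choose r := by rw [mul_comm, Nat.choose_succ_right_eq, mul_comm]
      _ ≤ (x - r) * #((∂ A).memberSubfamily v) := by gcongr
  have hW : ∀ S ∈ A, S ⊆ A.sup id := fun S hS ↦ le_sup (f := id) hS
  have hW' : ∀ S ∈ ∂ A, S ⊆ A.sup id := fun S hS ↦ by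
    obtain ⟨T, hT, hST⟩ := exists_subset_of_mem_shadow hS
    exact hST.trans (hW T hT)
  have hsum := sum_le_sum fun v (_ : v ∈ A.sup id) ↦ hlink' v
  rw [← mul_sum, ← mul_sum, sum_card_memberSubfamily hA hW,
    sum_card_memberSubfamily hA.shadow hW', show r + 2 - 1 = r + 1 from rfl] at hsum
  refine Nat.le_of_mul_le_mul_left ?_ r.succ_pos
  linarith

theorem eq_empty_of_shadow_eq_empty {r : ℕ} (hA : (A : Set (Finset α)).Sized (r + 1))
    (h : ∂ A = ∅) : A = ∅ := by
  refine eq_empty_of_forall_notMem fun S hS ↦ ?_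
  obtain ⟨a, ha⟩ : S.Nonempty := card_pos.1 (by rw [hA hS]; exact r.succ_pos)
  exact notMem_empty _ (h ▸ erase_mem_shadow hS ha)

theorem mul_card_le_mul_card_shadow {r x : ℕ} (hA : (A : Set (Finset α)).Sized (r + 2))
    (hcard : #(∂ A) ≤ x.choose (r + 1)) : (r + 2) * #A ≤ (x - (r + 1)) * #(∂ A) := by
  induction r generalizing x A with
  | zero =>
    cases x with
    | zero => simp [eq_empty_of_shadow_eq_empty hA (card_eq_zero.1 (Nat.le_zero.1 hcard))]
    | succ x =>
      rw [Nat.add_sub_add_right]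
      refine mul_card_le_mul_card_shadow_of_links hA hcard fun v hv ↦ ?_
      have hshadow : ∂ (A.memberSubfamily v) = ∅ := by
        rw [← subset_empty, ← card_eq_zero.1 (Nat.lt_one_iff.1 (x.choose_zero_right ▸ hv))]
        exact shadow_memberSubfamily_subset A v
      simp [eq_empty_of_shadow_eq_empty (sized_memberSubfamily hA v) hshadow]
  | succ r ih =>
    cases x with
    | zero => simp [eq_empty_of_shadow_eq_empty hA (card_eq_zero.1 (Nat.le_zero.1 hcard))]
    | succ x =>
      rw [Nat.add_sub_add_right]
      refine mul_card_le_mul_card_shadow_of_links hA hcard fun v hv ↦ ?_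
      have hshadow := card_le_card (shadow_memberSubfamily_subset A v)
      exact (ih (sized_memberSubfamily hA v) (hshadow.trans hv.le)).trans
        (Nat.mul_le_mul_left _ hshadow)

theorem card_mul_choose_le_card_shadow_iterate_mul_choose {t i x : ℕ}
    (hA : (A : Set (Finset α)).Sized (t + 1 + i)) (hcard : #(∂^[i] A) ≤ x.choose (t + 1)) :
    #A * x.choose (t + 1) ≤ #(∂^[i] A) * x.choose (t + 1 + i) := by
  induction i generalizing A with
  | zero => rfl
  | succ i ih =>
    rw [Function.iterate_succ_apply] at hcard ⊢
    have hind := ih hA.shadow hcard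
    rcases Nat.eq_zero_or_pos (x.choose (t + 1)) with hx | hx
    · simp [hx]
    have hshadow : #(∂ A) ≤ x.choose (t + i + 1) := by
      refine Nat.le_of_mul_le_mul_right ?_ hx
      rw [add_right_comm, mul_comm (x.choose _)]
      exact hind.trans (Nat.mul_le_mul_right _ hcard)
    have hstep := mul_card_le_mul_card_shadow (r := t + i) (by convert hA using 1; ring) hshadow
    refine Nat.le_of_mul_le_mul_left ?_ (t + 1 + i).succ_pos
    calc (t + 1 + i + 1) * (#A * x.choose (t + 1)) = (t + i + 2) * #A * x.choose (t + 1) := by ring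
      _ ≤ (x - (t + i + 1)) * #(∂ A) * x.choose (t + 1) := by gcongr
      _ = (x - (t + i + 1)) * (#(∂ A) * x.choose (t + 1)) := by ring
      _ ≤ (x - (t + i + 1)) * (#(∂^[i] (∂ A)) * x.choose (t + 1 + i)) := by gcongr
      _ = #(∂^[i] (∂ A)) * (x.choose (t + 1 + i) * (x - (t + 1 + i))) := by
          rw [add_right_comm t i 1]; ring
      _ = (t + 1 + i).succ * (#(∂^[i] (∂ A)) * x.choose (t + 1 + (i + 1))) := by
          rw [← Nat.choose_succ_right_eq, ← add_assoc, Nat.succ_eq_add_one]; ring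

end Shadow

section NearlyCovered
open Finset
open scoped FinsetFamily

variable {α : Type*} [DecidableEq α]

/-- The `q`-subsets of `W` all but fewer than `ψ` of whose `m`-subsets belong to `G`. -/
def nearlyCovered (W : Finset α) (G : Finset (Finset α)) (m q ψ : ℕ) : Finset (Finset α) :=
  {u ∈ W.powersetCard q | #(u.powersetCard m \ G) < ψ}

/-- The `l`-subsets of `W` all of whose disjoint `q`-sets are nearly covered by `G`: the members
avoiding the centre `x` that a family may still have, once `G` records sets `w` for which
`insert x w` is known to be absent. -/
def candidates (W : Finset α) (G : Finset (Finset α)) (m q l ψ : ℕ) : Finset (Finset α) :=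
  {v ∈ W.powersetCard l | (W \ v).powersetCard q ⊆ nearlyCovered W G m q ψ}

theorem card_nearlyCovered_mul_choose_le {W : Finset α} {G : Finset (Finset α)} {m q ψ : ℕ}
    (hG : G ⊆ W.powersetCard m) (hmq : m ≤ q) :
    #(nearlyCovered W G m q ψ) * q.choose m ≤
      #G * (#W - m).choose (q - m) + #(nearlyCovered W G m q ψ) * ψ := by
  set C := nearlyCovered W G m q ψ
  have hlower : ∀ u ∈ C, q.choose m ≤ #(G.bipartiteAbove (fun u w ↦ w ⊆ u) u) + ψ := by
    intro u hu
    obtain ⟨huW, hu⟩ := mem_filter.1 hu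
    rw [← (mem_powersetCard.1 huW).2, ← card_powersetCard,
      ← card_inter_add_card_sdiff (u.powersetCard m) G]
    refine Nat.add_le_add (card_le_card fun w hw ↦ ?_) hu.le
    obtain ⟨hwu, hwG⟩ := mem_inter.1 hw
    exact (mem_bipartiteAbove _).2 ⟨hwG, (mem_powersetCard.1 hwu).1⟩
  have hupper : ∀ w ∈ G, #(C.bipartiteBelow (fun u w ↦ w ⊆ u) w) ≤ (#W - m).choose (q - m) := by
    intro w hw
    obtain ⟨hwW, hwm⟩ := mem_powersetCard.1 (hG hw)
    have hcount := card_filter_powersetCard_subset w W q hwW (hwm.trans_le hmq)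
    rw [hwm] at hcount
    rw [← hcount]
    exact card_le_card (filter_subset_filter _ (filter_subset _ _))
  calc #C * q.choose m = ∑ _ ∈ C, q.choose m := by rw [sum_const, smul_eq_mul]
    _ ≤ ∑ w ∈ G, #(C.bipartiteBelow (fun u w ↦ w ⊆ u) w) + #C * ψ := by
        rw [← sum_card_bipartiteAbove_eq_sum_card_bipartiteBelow, ← smul_eq_mul, ← sum_const,
          ← sum_add_distrib]
        exact sum_le_sum hlower
    _ ≤ #G * (#W - m).choose (q - m) + #C * ψ := by
        gcongr
        exact sum_le_card_nsmul _ _ _ hupper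

theorem card_candidates_mul_choose_le {W : Finset α} {G : Finset (Finset α)} {m q l i ψ x : ℕ}
    (hq : 0 < q) (hW : #W = l + (q + i))
    (hcard : #(nearlyCovered W G m q ψ) ≤ x.choose q) :
    #(candidates W G m q l ψ) * x.choose q ≤ #(nearlyCovered W G m q ψ) * x.choose (q + i) := by
  set B := candidates W G m q l ψ
  obtain ⟨t, rfl⟩ : ∃ t, q = t + 1 := ⟨q - 1, by omega⟩
  have hB : ∀ v ∈ B, v ⊆ W ∧ #v = l := fun v hv ↦ mem_powersetCard.1 (mem_filter.1 hv).1
  have hcompl : #(B.image (W \ ·)) = #B := card_image_of_injOn fun u hu v hv h ↦ by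
    rw [← Finset.sdiff_sdiff_eq_self (hB u hu).1, ← Finset.sdiff_sdiff_eq_self (hB v hv).1]
    exact congrArg (W \ ·) h
  have hsized : (B.image (W \ ·) : Set (Finset α)).Sized (t + 1 + i) := by
    intro S hS
    obtain ⟨v, hv, rfl⟩ := mem_image.1 hS
    rw [card_sdiff_of_subset (hB v hv).1, (hB v hv).2]
    omega
  have hshadow : ∂^[i] (B.image (W \ ·)) ⊆ nearlyCovered W G m (t + 1) ψ := by
    intro u hu
    have hut := hsized.shadow_iterate hu
    obtain ⟨S, hS, huS, -⟩ := mem_shadow_iterate_iff_exists_sdiff.1 hu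
    obtain ⟨v, hv, rfl⟩ := mem_image.1 hS
    exact (mem_filter.1 hv).2 (mem_powersetCard.2 ⟨huS, by simpa using hut⟩)
  rw [← hcompl]
  exact (card_mul_choose_le_card_shadow_iterate_mul_choose hsized
    ((card_le_card hshadow).trans hcard)).trans (Nat.mul_le_mul_right _ (card_le_card hshadow))

theorem choose_mul_add_two_mul_add_one (N r : ℕ) :
    N.choose r * ((N + 2) * (N + 1)) = (N + 2).choose r * ((N + 2 - r) * (N + 1 - r)) :=
  calc N.choose r * ((N + 2) * (N + 1)) = (N.choose r * (N + 1)) * (N + 2) := by ring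
    _ = ((N + 1).choose r * (N + 1 + 1)) * (N + 1 - r) := by rw [Nat.choose_mul_succ_eq]; ring
    _ = (N + 2).choose r * ((N + 2 - r) * (N + 1 - r)) := by rw [Nat.choose_mul_succ_eq]; ring

theorem choose_mul_add_two_mul_add_one_of_add_one_eq {N m d : ℕ} (hN : N + 1 = 2 * m + d) :
    N.choose (m + d) * ((N + 2) * (N + 1)) = (N + 2).choose m * ((m + 1 + d) * m) := by
  have hsymm : (N + 2).choose (m + d) = (N + 2).choose (m + 1) :=
    Nat.choose_symm_of_eq_add (by omega)
  rw [choose_mul_add_two_mul_add_one, hsymm, show N + 2 - (m + d) = m + 1 by omega,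
    show N + 1 - (m + d) = m by omega, ← mul_assoc, Nat.choose_succ_right_eq, mul_assoc,
    show N + 2 - m = m + 1 + d by omega]

section Arithmetic
variable {c g ψ D A P Q n : ℕ}

theorem mul_le_of_double_count (hPQ : P * D = Q * A) (hD : 0 < D)
    (hc : c * D ≤ g * A + c * ψ) (hψ : 4 * (n + 1) * ψ ≤ D) :
    c * (4 * n + 3) * Q ≤ 4 * (n + 1) * g * P := by
  have hcD : c * (4 * n + 3) * D ≤ 4 * (n + 1) * g * A := by
    have hmul := Nat.mul_le_mul_left (4 * (n + 1)) hc
    have hψ' := Nat.mul_le_mul_left c hψ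
    linarith
  refine Nat.le_of_mul_le_mul_right ?_ hD
  calc c * (4 * n + 3) * Q * D = c * (4 * n + 3) * D * Q := by ring
    _ ≤ 4 * (n + 1) * g * A * Q := by gcongr
    _ = 4 * (n + 1) * g * P * D := by rw [mul_assoc _ P, hPQ]; ring

theorem eight_mul_le_of_double_count (hQ : 0 < Q) (hg : 16 * g ≤ Q)
    (hc : c * (4 * n + 3) * Q ≤ 4 * (n + 1) * g * P) : 8 * c ≤ P := by
  have hcP : 4 * c * (4 * n + 3) ≤ (n + 1) * P := by
    refine Nat.le_of_mul_le_mul_right ?_ hQ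
    calc 4 * c * (4 * n + 3) * Q = 4 * (c * (4 * n + 3) * Q) := by ring
      _ ≤ 4 * (4 * (n + 1) * g * P) := by gcongr
      _ = (n + 1) * P * (16 * g) := by ring
      _ ≤ (n + 1) * P * Q := by gcongr
  refine le_of_mul_le_mul_left ?_ n.succ_pos
  linarith [Nat.zero_le (c * n)]

theorem two_mul_add_le_of_double_count {b P₂ R₂ E V u m : ℕ} (hP : 0 < P)
    (hV : 0 < V) (hc : c * (4 * n + 3) * Q ≤ 4 * (n + 1) * g * P)
    (hP₂ : P₂ * E = P * V) (hR₂ : R₂ * E = Q * (u * m)) (hb : b * P₂ ≤ c * R₂)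
    (hlower : u * m + u ≤ V) (hupper : V ≤ (n + 1) * u) :
    2 * (n + 1) * b + g ≤ 2 * (n + 1) * g := by
  have hbV : b * V * P ≤ c * Q * (u * m) := by
    calc b * V * P = b * P₂ * E := by rw [mul_assoc, mul_comm V, ← hP₂]; ring
      _ ≤ c * R₂ * E := by gcongr
      _ = c * Q * (u * m) := by rw [mul_assoc, hR₂]; ring
  have hbV' : b * V * (4 * n + 3) ≤ 4 * (n + 1) * g * (u * m) := by
    refine Nat.le_of_mul_le_mul_right ?_ hP
    calc b * V * (4 * n + 3) * P = b * V * P * (4 * n + 3) := by ring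
      _ ≤ c * Q * (u * m) * (4 * n + 3) := by gcongr
      _ = c * (4 * n + 3) * Q * (u * m) := by ring
      _ ≤ 4 * (n + 1) * g * P * (u * m) := by gcongr
      _ = 4 * (n + 1) * g * (u * m) * P := by ring
  have hum : (n + 1) * (u * m) ≤ n * V := by
    have hmul := Nat.mul_le_mul_left (n + 1) hlower
    linarith
  have hb' : b * (4 * n + 3) ≤ 4 * g * n := by
    refine Nat.le_of_mul_le_mul_right ?_ hV
    have hmul := Nat.mul_le_mul_left (4 * g) hum
    linarith
  refine le_of_mul_le_mul_left ?_ (show 0 < 4 * n + 3 by omega)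
  have hmul := Nat.mul_le_mul_left (2 * (n + 1)) hb'
  linarith [Nat.zero_le (n * g)]

end Arithmetic

-- The inequality is the gain of the near-star count: each candidate rules out more than one set
-- through the centre.
theorem two_mul_card_candidates_add_card_le {W : Finset α} {G : Finset (Finset α)}
    {m s d ψ : ℕ} (hm : 0 < m) (hsd : 2 * s < d) (hW : #W = 2 * m + 1 + d)
    (hG : G ⊆ W.powersetCard m) (hψ : 4 * (#W + 1) * ψ ≤ (m + s).choose m)
    (hGcard : 16 * #G ≤ (#W).choose m) :
    2 * (#W + 1) * #(candidates W G m (m + s) (m + 1) ψ) + #G ≤ 2 * (#W + 1) * #G := by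
  obtain ⟨N, hN⟩ : ∃ N, N + 1 = 2 * m + d := ⟨2 * m + d - 1, by omega⟩
  obtain ⟨e, rfl⟩ : ∃ e, d = 2 * s + 1 + e := ⟨d - (2 * s + 1), by omega⟩
  have hWN : #W = N + 2 := by omega
  have hPQ := Nat.choose_mul (n := #W) (k := m + s) (s := m) (by omega)
  rw [Nat.add_sub_cancel_left] at hPQ
  have hcount := card_nearlyCovered_mul_choose_le (q := m + s) (ψ := ψ) hG (by omega)
  rw [Nat.add_sub_cancel_left] at hcount
  have hc := mul_le_of_double_count hPQ (Nat.choose_pos (by omega)) hcount hψ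
  have hP : 0 < (#W).choose (m + s) := Nat.choose_pos (by omega)
  have hP₂ := choose_mul_add_two_mul_add_one N (m + s)
  rw [← hWN, show #W - (m + s) = m + s + 2 + e by omega,
    show N + 1 - (m + s) = m + s + 1 + e by omega] at hP₂
  have hR₂ := choose_mul_add_two_mul_add_one_of_add_one_eq hN
  rw [← hWN] at hR₂
  have hE : #W * (N + 1) ≤ 8 * ((m + s + 2 + e) * (m + s + 1 + e)) := by
    calc #W * (N + 1) ≤ (2 * (m + s + 2 + e)) * (4 * (m + s + 1 + e)) :=
          Nat.mul_le_mul (by omega) (by omega)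
      _ = _ := by ring
  have hcP₂ : #(nearlyCovered W G m (m + s) ψ) ≤ N.choose (m + s) := by
    have h8 := eight_mul_le_of_double_count (Nat.choose_pos (by omega)) hGcard hc
    refine Nat.le_of_mul_le_mul_right ?_ (show 0 < #W * (N + 1) by rw [hWN]; positivity)
    calc _ ≤ #(nearlyCovered W G m (m + s) ψ) * (8 * ((m + s + 2 + e) * (m + s + 1 + e))) := by
          gcongr
      _ = 8 * #(nearlyCovered W G m (m + s) ψ) * ((m + s + 2 + e) * (m + s + 1 + e)) := by ring
      _ ≤ _ := by rw [hP₂]; gcongr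
  have hKK := card_candidates_mul_choose_le (l := m + 1) (i := s + 1 + e) (by omega : 0 < m + s)
    (by omega) hcP₂
  rw [show m + s + (s + 1 + e) = m + (2 * s + 1 + e) by omega] at hKK
  refine two_mul_add_le_of_double_count hP (by positivity) hc hP₂ hR₂
    hKK ?_ ?_
  · linarith [Nat.zero_le ((m + 1) * e), Nat.zero_le ((s + 1 + e) * (s + e))]
  · rw [mul_comm (#W + 1)]
    exact Nat.mul_le_mul (by omega) (by omega)

end NearlyCovered

section NearStar
open Finset

variable {α : Type*} [DecidableEq α]

/-- The `m`-subsets of `W` disjoint from some member of `B`. When `B` collects the members avoiding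
`x` of an intersecting family, these are the sets `w` for which `insert x w` is absent. -/
def blockedSets (W : Finset α) (m : ℕ) (B : Finset (Finset α)) : Finset (Finset α) :=
  {w ∈ W.powersetCard m | ∃ v ∈ B, Disjoint w v}

theorem biUnion_powersetCard_subset_powersetCard {W : Finset α} {T : Finset (Finset α)}
    (hT : ∀ u ∈ T, u ⊆ W) (m : ℕ) : T.biUnion (powersetCard m) ⊆ W.powersetCard m :=
  biUnion_subset.2 fun u hu ↦ powersetCard_mono (hT u hu)

theorem biUnion_powersetCard_subset_blockedSets {W : Finset α} {B T : Finset (Finset α)} {q : ℕ}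
    (hT : T ⊆ blockedSets W q B) (m : ℕ) : T.biUnion (powersetCard m) ⊆ blockedSets W m B := by
  intro w hw
  obtain ⟨u, hu, hwu⟩ := mem_biUnion.1 hw
  obtain ⟨hwu, hwm⟩ := mem_powersetCard.1 hwu
  obtain ⟨huW, v, hv, hdisj⟩ := mem_filter.1 (hT hu)
  exact mem_filter.2 ⟨mem_powersetCard.2 ⟨hwu.trans (mem_powersetCard.1 huW).1, hwm⟩, v, hv,
    hdisj.mono_left hwu⟩

theorem subset_candidates_of_forall_blockedSets {W : Finset α} {B G : Finset (Finset α)}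
    {m q l ψ : ℕ} (hB : B ⊆ W.powersetCard l)
    (hG : ∀ u ∈ blockedSets W q B, #(u.powersetCard m \ G) < ψ) :
    B ⊆ candidates W G m q l ψ := by
  refine fun v hv ↦ mem_filter.2 ⟨hB hv, fun u hu ↦ ?_⟩
  obtain ⟨huv, huq⟩ := mem_powersetCard.1 hu
  have huW : u ∈ W.powersetCard q := mem_powersetCard.2 ⟨huv.trans sdiff_subset, huq⟩
  exact mem_filter.2 ⟨huW, hG u (mem_filter.2 ⟨huW, v, hv, disjoint_of_subset_left huv
    sdiff_disjoint⟩)⟩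

theorem blockedSets_nonempty {W v : Finset α} {B : Finset (Finset α)} {q : ℕ} (hv : v ∈ B)
    (hcard : q ≤ #(W \ v)) : (blockedSets W q B).Nonempty := by
  obtain ⟨u, huv, huq⟩ := exists_subset_card_eq hcard
  exact ⟨u, mem_filter.2 ⟨mem_powersetCard.2 ⟨huv.trans sdiff_subset, huq⟩, v, hv,
    disjoint_of_subset_left huv sdiff_disjoint⟩⟩

theorem blockedSets_subset (W : Finset α) (m : ℕ) (B : Finset (Finset α)) :
    blockedSets W m B ⊆ W.powersetCard m :=
  filter_subset _ _

variable [Fintype α] {x : α} {m s d : ℕ}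

/-- The container consisting of the sets in `B` and of all `insert x w` with `#w = m`, `x ∉ w` and
`w ∉ S`. -/
def starContainer (x : α) (m : ℕ) (S B : Finset (Finset α)) : Finset (Finset α) :=
  ((univ.erase x).powersetCard m \ S).image (insert x) ∪ B

theorem card_starContainer_add_le {S : Finset (Finset α)} (B : Finset (Finset α))
    (hS : S ⊆ (univ.erase x).powersetCard m) :
    #(starContainer x m S B) + #S ≤ (Fintype.card α - 1).choose m + #B := by
  have hstar : #(((univ.erase x).powersetCard m \ S).image (insert x)) + #S ≤
      (Fintype.card α - 1).choose m :=
    calc #(((univ.erase x).powersetCard m \ S).image (insert x)) + #S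
        ≤ #((univ.erase x).powersetCard m \ S) + #S := Nat.add_le_add_right card_image_le _
      _ = (Fintype.card α - 1).choose m := by
        rw [card_sdiff_add_card_eq_card hS, card_powersetCard, card_erase_of_mem (mem_univ x),
          card_univ]
  have hunion := card_union_le (((univ.erase x).powersetCard m \ S).image (insert x)) B
  rw [starContainer]
  omega

theorem subset_starContainer {F S B : Finset (Finset α)}
    (hsized : (F : Set (Finset α)).Sized (m + 1)) (hF : (F : Set (Finset α)).Intersecting)
    (hS : S ⊆ blockedSets (univ.erase x) m {A ∈ F | x ∉ A}) (hB : {A ∈ F | x ∉ A} ⊆ B) :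
    F ⊆ starContainer x m S B := by
  intro A hA
  by_cases hx : x ∈ A
  · refine mem_union_left _ (mem_image.2 ⟨A.erase x, mem_sdiff.2 ⟨mem_powersetCard.2
      ⟨erase_subset_erase _ (subset_univ _), ?_⟩, fun hAS ↦ ?_⟩, insert_erase hx⟩)
    · rw [card_erase_of_mem hx, hsized hA, Nat.add_sub_cancel]
    · obtain ⟨-, v, hv, hdisj⟩ := mem_filter.1 (hS hAS)
      obtain ⟨hvF, hxv⟩ := mem_filter.1 hv
      exact hF hA hvF ((erase_eq_of_notMem hxv) ▸ (disjoint_erase_comm.1 hdisj))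
  · exact mem_union_right _ (hB (mem_filter.2 ⟨hA, hx⟩))

theorem subset_powersetCard_of_notMem {F : Finset (Finset α)} {k : ℕ}
    (hsized : (F : Set (Finset α)).Sized k) :
    {A ∈ F | x ∉ A} ⊆ (univ.erase x).powersetCard k := by
  intro A hA
  obtain ⟨hAF, hxA⟩ := mem_filter.1 hA
  exact mem_powersetCard.2 ⟨subset_erase.2 ⟨subset_univ A, hxA⟩, hsized hAF⟩

theorem exists_fingerprint_of_intersecting {F : Finset (Finset α)} {q ψ : ℕ}
    (hn : m + 1 + q < Fintype.card α) (hψ₀ : 0 < ψ) (hψ : ψ ≤ q.choose m)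
    (hsized : (F : Set (Finset α)).Sized (m + 1)) (hx : ∃ A ∈ F, x ∉ A) :
    ∃ T ⊆ (univ.erase x).powersetCard q, T.Nonempty ∧ #T * ψ ≤ #(T.biUnion (powersetCard m)) ∧
      T.biUnion (powersetCard m) ⊆ blockedSets (univ.erase x) m {A ∈ F | x ∉ A} ∧
      {A ∈ F | x ∉ A} ⊆
        candidates (univ.erase x) (T.biUnion (powersetCard m)) m q (m + 1) ψ := by
  obtain ⟨T, hTU, hTcard, hT⟩ := exists_container (powersetCard m)
    (blockedSets (univ.erase x) q {A ∈ F | x ∉ A}) hψ₀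
  refine ⟨T, hTU.trans (blockedSets_subset _ _ _), ?_, hTcard,
    biUnion_powersetCard_subset_blockedSets hTU m,
    subset_candidates_of_forall_blockedSets (subset_powersetCard_of_notMem hsized) hT⟩
  obtain ⟨A, hA, hxA⟩ := hx
  obtain ⟨u, hu⟩ := blockedSets_nonempty (W := univ.erase x) (q := q)
    (B := {A ∈ F | x ∉ A}) (mem_filter.2 ⟨hA, hxA⟩) (by
      rw [card_sdiff_of_subset (subset_erase.2 ⟨subset_univ A, hxA⟩), hsized hA,
        card_erase_of_mem (mem_univ x), card_univ]
      omega)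
  by_contra hempty
  have hu' := hT u hu
  rw [not_nonempty_iff_eq_empty.1 hempty, biUnion_empty, sdiff_empty, card_powersetCard,
    (mem_powersetCard.1 (mem_filter.1 hu).1).2] at hu'
  omega

/-- The container of a family near the star at `x` with fingerprint `T`, a family of `q`-sets
blocked by the members avoiding `x`. -/
def fingerprintContainer (x : α) (m q ψ : ℕ) (T : Finset (Finset α)) : Finset (Finset α) :=
  starContainer x m (T.biUnion (powersetCard m))
    (candidates (univ.erase x) (T.biUnion (powersetCard m)) m q (m + 1) ψ)

theorem card_fingerprintContainer_add_le {T : Finset (Finset α)} {n N : ℕ}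
    (hn : Fintype.card α = n) (hN : (n - 1).choose m = N) (hnd : n = 2 * m + 2 + d)
    (hm : 0 < m) (hsd : 2 * s < d) (hψ : 16 * n ^ 3 ≤ (m + s).choose m)
    (hT : T ⊆ (univ.erase x).powersetCard (m + s))
    (hTcard : #T * (4 * n ^ 2) ≤ #(T.biUnion (powersetCard m)))
    (hsmall : 16 * #(T.biUnion (powersetCard m)) ≤ N) :
    #(fingerprintContainer x m (m + s) (4 * n ^ 2) T) + 2 * n * #T ≤ N := by
  have hW : #((univ : Finset α).erase x) = n - 1 := by
    rw [card_erase_of_mem (mem_univ x), card_univ, hn]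
  have hTW := biUnion_powersetCard_subset_powersetCard
    (fun u hu ↦ (mem_powersetCard.1 (hT hu)).1) m
  have hgain := two_mul_card_candidates_add_card_le (ψ := 4 * n ^ 2) hm hsd (by omega) hTW
    (by rw [hW, Nat.sub_add_cancel (by omega)]; linarith) (by rwa [hW, hN])
  rw [hW, Nat.sub_add_cancel (by omega)] at hgain
  have hcontainer := card_starContainer_add_le (candidates (univ.erase x)
    (T.biUnion (powersetCard m)) m (m + s) (m + 1) (4 * n ^ 2)) hTW
  rw [hn, hN] at hcontainer
  have hloss : #(candidates (univ.erase x) (T.biUnion (powersetCard m)) m (m + s) (m + 1)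
      (4 * n ^ 2)) + 2 * n * #T ≤ #(T.biUnion (powersetCard m)) := by
    refine le_of_mul_le_mul_left ?_ (show 0 < 2 * n by omega)
    linarith
  rw [fingerprintContainer]
  omega

theorem card_starContainer_blockedSets_add_le {B : Finset (Finset α)} {n N : ℕ}
    (hn : Fintype.card α = n) (hn2 : 2 ≤ n) (hN : (n - 1).choose m = N) (hNn : 64 * n ≤ N)
    (hB : 32 * n * #B ≤ N) (hlarge : N < 16 * #(blockedSets (univ.erase x) m B)) :
    #(starContainer x m (blockedSets (univ.erase x) m B) B) + n * (N / (32 * n)) + n ≤ N := by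
  have hcontainer := card_starContainer_add_le B (blockedSets_subset (univ.erase x) m B)
  rw [hn, hN] at hcontainer
  have hdiv := Nat.mul_div_le N (32 * n)
  rw [mul_assoc] at hdiv
  have h64 : 64 * #B ≤ N := (Nat.mul_le_mul_right _ (by omega)).trans hB
  omega

theorem exists_fingerprint_or_exists_blocking_of_intersecting {F : Finset (Finset α)} {n N : ℕ}
    (hn : Fintype.card α = n) (hN : (n - 1).choose m = N) (hnd : n = 2 * m + 2 + d)
    (hm : 0 < m) (hsd : 2 * s < d) (hψ : 16 * n ^ 3 ≤ (m + s).choose m) (hNn : 64 * n ≤ N)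
    (hsized : (F : Set (Finset α)).Sized (m + 1)) (hF : (F : Set (Finset α)).Intersecting)
    (hx : ∃ A ∈ F, x ∉ A) (hfew : 32 * n * #{A ∈ F | x ∉ A} ≤ N) :
    (∃ T ⊆ (univ.erase x).powersetCard (m + s), T.Nonempty ∧
      F ⊆ fingerprintContainer x m (m + s) (4 * n ^ 2) T ∧
      #(fingerprintContainer x m (m + s) (4 * n ^ 2) T) + 2 * n * #T ≤ N) ∨
    ∃ B ⊆ (univ.erase x).powersetCard (m + 1), #B ≤ N / (32 * n) ∧
      F ⊆ starContainer x m (blockedSets (univ.erase x) m B) B ∧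
      #(starContainer x m (blockedSets (univ.erase x) m B) B) + n * (N / (32 * n)) + n ≤ N := by
  have hψ' : 4 * n * (4 * n ^ 2) ≤ (m + s).choose m := by linarith
  obtain ⟨T, hTU, hT, hTcard, hTB, hcand⟩ := exists_fingerprint_of_intersecting (q := m + s)
    (ψ := 4 * n ^ 2) (by omega) (by rw [hnd]; positivity)
    ((Nat.le_mul_of_pos_left _ (by omega)).trans hψ') hsized hx
  rcases le_or_gt (16 * #(T.biUnion (powersetCard m))) N with hsmall | hlarge
  · exact .inl ⟨T, hTU, hT, subset_starContainer hsized hF hTB hcand,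
      card_fingerprintContainer_add_le hn hN hnd hm hsd hψ hTU hTcard hsmall⟩
  · exact .inr ⟨_, subset_powersetCard_of_notMem hsized,
      (Nat.le_div_iff_mul_le (by omega)).2 (by linarith),
      subset_starContainer hsized hF subset_rfl subset_rfl,
      card_starContainer_blockedSets_add_le hn (by omega) hN hNn hfew
        (hlarge.trans_le (Nat.mul_le_mul_left _ (card_le_card hTB)))⟩

theorem card_mul_two_pow_le_of_near_star {n N : ℕ} (𝓕 : Finset (Finset (Finset α)))
    (hn : Fintype.card α = n) (hN : (n - 1).choose m = N) (hnd : n = 2 * m + 2 + d)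
    (hm : 0 < m) (hsd : 2 * s < d) (hψ : 16 * n ^ 3 ≤ (m + s).choose m) (hNn : 64 * n ≤ N)
    (h𝓕 : ∀ F ∈ 𝓕, (F : Set (Finset α)).Sized (m + 1) ∧ (F : Set (Finset α)).Intersecting ∧
      (∃ A ∈ F, x ∉ A) ∧ 32 * n * #{A ∈ F | x ∉ A} ≤ N) :
    #𝓕 * 2 ^ n ≤ 3 * 2 ^ N := by
  classical
  have hU (r : ℕ) : #((univ.erase x).powersetCard r) + 1 ≤ 2 ^ n := by
    rw [card_powersetCard, card_erase_of_mem (mem_univ x), card_univ, hn]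
    calc (n - 1).choose r + 1 ≤ 2 ^ (n - 1) := Nat.choose_lt_two_pow _ _ (by omega)
      _ ≤ 2 ^ n := Nat.pow_le_pow_right two_pos (n.sub_le 1)
  set p : Finset (Finset α) → Prop := fun F ↦ ∃ T ⊆ (univ.erase x).powersetCard (m + s),
    T.Nonempty ∧ F ⊆ fingerprintContainer x m (m + s) (4 * n ^ 2) T ∧
      #(fingerprintContainer x m (m + s) (4 * n ^ 2) T) + 2 * n * #T ≤ N
  have hfingerprint := card_mul_two_pow_le_of_fingerprint_nonempty {F ∈ 𝓕 | p F}
    ((univ.erase x).powersetCard (m + s)) _ ((Nat.le_succ _).trans (hU _))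
    fun F hF ↦ (mem_filter.1 hF).2
  have hblocking := card_mul_two_pow_le_of_card_fingerprint_le {F ∈ 𝓕 | ¬ p F}
    ((univ.erase x).powersetCard (m + 1)) _ (hU _) fun F hF ↦ by
      obtain ⟨hF𝓕, hpF⟩ := mem_filter.1 hF
      obtain ⟨hsized, hF, hx, hfew⟩ := h𝓕 F hF𝓕
      exact (exists_fingerprint_or_exists_blocking_of_intersecting hn hN hnd hm hsd hψ hNn hsized
        hF hx hfew).resolve_left hpF
  rw [← card_filter_add_card_filter_not p]
  linarith

end NearStar

section UniformProbability
open Finset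
open scoped BigOperators

variable {Ω ι : Type*} [Fintype Ω] {p q r : Ω → Prop}

open Classical in
/-- The probability of the event `p` when `ω : Ω` is chosen uniformly at random. -/
noncomputable def uniformProb (p : Ω → Prop) : ℝ :=
  𝔼 ω, if p ω then 1 else 0

theorem uniformProb_nonneg (p : Ω → Prop) : 0 ≤ uniformProb p :=
  expect_nonneg fun _ _ ↦ by positivity

theorem uniformProb_le_add (h : ∀ ω, p ω → q ω ∨ r ω) :
    uniformProb p ≤ uniformProb q + uniformProb r := by
  rw [uniformProb, uniformProb, uniformProb, ← expect_add_distrib]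
  refine expect_le_expect fun ω _ ↦ ?_
  have := h ω
  split_ifs <;> simp_all

theorem uniformProb_eq_zero (h : ∀ ω, ¬p ω) : uniformProb p = 0 :=
  expect_eq_zero fun ω _ ↦ if_neg (h ω)

theorem uniformProb_eq_one [Nonempty Ω] (h : ∀ ω, p ω) : uniformProb p = 1 := by
  simp [uniformProb, h]

theorem uniformProb_comp_equiv {Ω' : Type*} [Fintype Ω'] (e : Ω' ≃ Ω) (p : Ω → Prop) :
    uniformProb (fun ω ↦ p (e ω)) = uniformProb p :=
  Fintype.expect_equiv e _ _ fun _ ↦ rfl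

theorem sum_uniformProb (s : Finset ι) (p : ι → Ω → Prop) [∀ ω, DecidablePred (p · ω)] :
    ∑ i ∈ s, uniformProb (p i) = 𝔼 ω, (#{i ∈ s | p i ω} : ℝ) := by
  simp only [uniformProb, ← expect_sum_comm]
  refine expect_congr rfl fun ω _ ↦ ?_
  rw [card_filter, Nat.cast_sum]
  exact sum_congr rfl fun i _ ↦ by split_ifs <;> simp_all

theorem mul_uniformProb_le_sum {s : Finset ι} {p : ι → Ω → Prop} [∀ ω, DecidablePred (p · ω)]
    {c : ℕ} (h : ∀ ω, q ω → c ≤ #{i ∈ s | p i ω}) :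
    c * uniformProb q ≤ ∑ i ∈ s, uniformProb (p i) := by
  rw [sum_uniformProb, uniformProb, mul_expect]
  refine expect_le_expect fun ω _ ↦ ?_
  split_ifs with hω
  · simpa using h ω hω
  · simp

theorem uniformProb_le_sum {s : Finset ι} {p : ι → Ω → Prop} (h : ∀ ω, q ω → ∃ i ∈ s, p i ω) :
    uniformProb q ≤ ∑ i ∈ s, uniformProb (p i) := by
  classical
  have hcard (ω : Ω) (hω : q ω) : 1 ≤ #{i ∈ s | p i ω} := by
    obtain ⟨i, hi, hp⟩ := h ω hω
    exact card_pos.2 ⟨i, mem_filter.2 ⟨hi, hp⟩⟩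
  simpa using mul_uniformProb_le_sum hcard

end UniformProbability

section RandomBijection
open Finset
open scoped BigOperators

variable {α β : Type*}

theorem exists_perm_map_eq {ι : Type*} [Finite ι] {P Q : ι → Finset β}
    (hP : Pairwise fun i j ↦ Disjoint (P i) (P j)) (hQ : Pairwise fun i j ↦ Disjoint (Q i) (Q j))
    (hcard : ∀ i, #(P i) = #(Q i)) :
    ∃ e : Equiv.Perm β, ∀ i, (P i).map e.toEmbedding = Q i := by
  have inj_of_disjoint {R : ι → Finset β} (hR : Pairwise fun i j ↦ Disjoint (R i) (R j)) :
      Function.Injective fun a : Σ i, R i ↦ (a.2 : β) := by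
    rintro ⟨i, a⟩ ⟨j, b⟩ (hab : (a : β) = b)
    obtain rfl : i = j := by
      by_contra hij
      exact disjoint_left.1 (hR hij) a.2 (hab ▸ b.2)
    rw [Subtype.ext hab]
  let φ (i : ι) : P i ≃ Q i := equivOfCardEq (hcard i)
  obtain ⟨e, he⟩ := Equiv.Perm.exists_extending_pair _ _ (inj_of_disjoint hP)
    ((inj_of_disjoint hQ).comp (Equiv.sigmaCongrRight φ).injective)
  refine ⟨e, fun i ↦ eq_of_subset_of_card_le ?_ (by rw [card_map, hcard i])⟩
  intro y hy
  obtain ⟨x, hx, rfl⟩ := mem_map.1 hy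
  exact he ⟨i, x, hx⟩ ▸ (φ i ⟨x, hx⟩).2

theorem map_trans_toEmbedding (e : Equiv.Perm β) (σ : β ≃ α) (P : Finset β) :
    P.map (e.trans σ).toEmbedding = (P.map e.toEmbedding).map σ.toEmbedding :=
  (map_map e.toEmbedding σ.toEmbedding P).symm

theorem card_filter_powersetCard_map (σ : β ≃ α) (W : Finset β) (k : ℕ) (p : Finset α → Prop)
    [DecidablePred p] :
    #{I ∈ W.powersetCard k | p (I.map σ.toEmbedding)} =
      #{A ∈ (W.map σ.toEmbedding).powersetCard k | p A} := by
  rw [powersetCard_map, filter_map, card_map]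
  rfl

variable [Fintype α] [Fintype β] [DecidableEq α] [DecidableEq β]

theorem uniformProb_trans (e : Equiv.Perm β) (p : (β ≃ α) → Prop) :
    uniformProb (fun σ ↦ p (e.trans σ)) = uniformProb p :=
  uniformProb_comp_equiv (e.symm.equivCongr (Equiv.refl α)) p

theorem uniformProb_map_mem_mul_choose {C : Finset (Finset α)} {k : ℕ} [Nonempty (β ≃ α)]
    (hC : (C : Set (Finset α)).Sized k) {I : Finset β} (hI : #I = k) :
    uniformProb (fun σ : β ≃ α ↦ I.map σ.toEmbedding ∈ C) * (Fintype.card β).choose k = #C := by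
  have hconst : ∀ J ∈ (univ : Finset β).powersetCard k,
      uniformProb (fun σ : β ≃ α ↦ J.map σ.toEmbedding ∈ C) =
        uniformProb (fun σ : β ≃ α ↦ I.map σ.toEmbedding ∈ C) := by
    intro J hJ
    obtain ⟨e, he⟩ := exists_perm_map_eq (P := fun _ : Unit ↦ I) (Q := fun _ ↦ J)
      Subsingleton.pairwise Subsingleton.pairwise fun _ ↦ by rw [hI, (mem_powersetCard.1 hJ).2]
    simp only [← uniformProb_trans e (fun σ : β ≃ α ↦ I.map σ.toEmbedding ∈ C),
      map_trans_toEmbedding, he ()]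
  have hcount (σ : β ≃ α) :
      #{J ∈ (univ : Finset β).powersetCard k | J.map σ.toEmbedding ∈ C} = #C := by
    rw [card_filter_powersetCard_map σ _ _ (· ∈ C), map_univ_equiv]
    congr 1
    ext A
    simpa using fun hA ↦ hC hA
  have hsum := sum_uniformProb ((univ : Finset β).powersetCard k)
    fun J (σ : β ≃ α) ↦ J.map σ.toEmbedding ∈ C
  rw [sum_congr rfl hconst, sum_const, card_powersetCard, card_univ, nsmul_eq_mul] at hsum
  simpa [hcount, mul_comm] using hsum

theorem uniformProb_map_mem_and_map_mem_mul_choose_le {C : Finset (Finset α)} {k ψ : ℕ}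
    [Nonempty (β ≃ α)] (hψ : ∀ u ∈ C, #{v ∈ C | Disjoint u v} ≤ ψ) {I J : Finset β}
    (hI : #I = k) (hJ : #J = k) (hIJ : Disjoint I J) :
    uniformProb (fun σ : β ≃ α ↦ I.map σ.toEmbedding ∈ C ∧ J.map σ.toEmbedding ∈ C) *
      (Fintype.card β - k).choose k ≤ ψ := by
  have hconst : ∀ J' ∈ Iᶜ.powersetCard k,
      uniformProb (fun σ : β ≃ α ↦ I.map σ.toEmbedding ∈ C ∧ J'.map σ.toEmbedding ∈ C) =
        uniformProb (fun σ : β ≃ α ↦ I.map σ.toEmbedding ∈ C ∧ J.map σ.toEmbedding ∈ C) := by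
    intro J' hJ'
    obtain ⟨hIJ', hJ'⟩ := mem_powersetCard.1 hJ'
    have hdisj : Disjoint I J' := disjoint_compl_right.mono_right hIJ'
    obtain ⟨e, he⟩ := exists_perm_map_eq (P := ![I, J]) (Q := ![I, J'])
      (by simp [Pairwise, Fin.forall_fin_two, hIJ, hIJ.symm])
      (by simp [Pairwise, Fin.forall_fin_two, hdisj, hdisj.symm])
      (by simp [Fin.forall_fin_two, hJ, hJ'])
    obtain ⟨heI, heJ⟩ : I.map e.toEmbedding = I ∧ J.map e.toEmbedding = J' :=
      Fin.forall_fin_two.1 he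
    simp only [← uniformProb_trans e fun σ : β ≃ α ↦ _ ∧ J.map σ.toEmbedding ∈ C,
      map_trans_toEmbedding, heI, heJ]
  have hcount (σ : β ≃ α) : #{J' ∈ Iᶜ.powersetCard k |
      I.map σ.toEmbedding ∈ C ∧ J'.map σ.toEmbedding ∈ C} ≤ ψ := by
    by_cases hσ : I.map σ.toEmbedding ∈ C
    · rw [card_filter_powersetCard_map σ _ k fun A ↦ I.map σ.toEmbedding ∈ C ∧ A ∈ C]
      refine (card_le_card fun A hA ↦ ?_).trans (hψ _ hσ)
      simp only [mem_filter, mem_powersetCard] at hA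
      refine mem_filter.2 ⟨hA.2.2, disjoint_of_subset_right hA.1.1 ?_⟩
      exact (disjoint_map _).2 disjoint_compl_right
    · simp [hσ]
  have hsum := sum_uniformProb (Iᶜ.powersetCard k)
    fun J' (σ : β ≃ α) ↦ I.map σ.toEmbedding ∈ C ∧ J'.map σ.toEmbedding ∈ C
  rw [sum_congr rfl hconst, sum_const, card_powersetCard, card_compl, hI, nsmul_eq_mul] at hsum
  rw [mul_comm, hsum]
  exact expect_le univ_nonempty fun σ _ ↦ by exact_mod_cast hcount σ

end RandomBijection

section CyclicArc
open Finset

variable {n : ℕ} [NeZero n] {k : ℕ} {a b x : ZMod n}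

/-- The cyclic interval `{a, a + 1, …, a + (k - 1)}` of `ZMod n`. -/
def cyclicArc (k : ℕ) (a : ZMod n) : Finset (ZMod n) :=
  {x | (x - a).val < k}

theorem mem_cyclicArc : x ∈ cyclicArc k a ↔ (x - a).val < k := by
  simp [cyclicArc]

theorem card_cyclicArc (hk : k ≤ n) (a : ZMod n) : #(cyclicArc k a) = k := by
  conv_rhs => rw [← card_range k]
  refine card_nbij' (fun x ↦ (x - a).val) (fun t ↦ a + t) ?_ ?_ ?_ ?_
  · intro x hx
    simpa [mem_cyclicArc] using hx
  · intro t ht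
    have ht : t < k := by simpa using ht
    simpa [mem_cyclicArc, ZMod.val_natCast_of_lt (ht.trans_le hk)] using ht
  · intro x _
    simp
  · intro t ht
    have ht : t < k := by simpa using ht
    simp [ZMod.val_natCast_of_lt (ht.trans_le hk)]

theorem disjoint_cyclicArc (hle : k ≤ (b - a).val) (hle' : (b - a).val + k ≤ n) :
    Disjoint (cyclicArc k a) (cyclicArc k b) := by
  refine disjoint_left.2 fun x hxa hxb ↦ ?_
  rw [mem_cyclicArc] at hxa hxb
  rw [show x - a = (x - b) + (b - a) by ring, ZMod.val_add_of_lt (by omega)] at hxa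
  omega

theorem self_mem_cyclicArc (hk : 0 < k) (a : ZMod n) : a ∈ cyclicArc k a := by
  simpa [mem_cyclicArc] using hk

theorem add_natCast_notMem_cyclicArc (hk : k < n) (a : ZMod n) : a + k ∉ cyclicArc k a := by
  simp [mem_cyclicArc, ZMod.val_natCast_of_lt hk]

theorem val_add_one_of_add_one_ne_zero (hx : x + 1 ≠ 0) : (x + 1).val = x.val + 1 := by
  have hcast : x + 1 = ((x.val + 1 : ℕ) : ZMod n) := by simp
  have hlt : x.val + 1 < n := by
    refine lt_of_le_of_ne x.val_lt fun h ↦ hx ?_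
    rw [hcast, h, ZMod.natCast_self]
  rw [hcast, ZMod.val_natCast_of_lt hlt]

theorem val_sub_of_ne (ha : x ≠ a) : (x - a).val = (x - (a + 1)).val + 1 := by
  have heq : x - a = x - (a + 1) + 1 := by ring
  rw [heq, val_add_one_of_add_one_ne_zero]
  rwa [← heq, sub_ne_zero]

theorem add_one_mem_cyclicArc_iff (ha : x + 1 ≠ a) (hak : x + 1 ≠ a + k) :
    x + 1 ∈ cyclicArc k a ↔ x ∈ cyclicArc k a := by
  have hval : (x + 1 - a).val = (x - a).val + 1 := by
    rw [val_sub_of_ne ha, add_sub_add_right_eq_sub]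
  have hne : (x + 1 - a).val ≠ k := fun h ↦ hak <| by
    rw [← h, ZMod.natCast_zmod_val, add_sub_cancel]
  rw [mem_cyclicArc, mem_cyclicArc]
  omega

theorem cyclicArc_add_one (hk : 0 < k) (hkn : k < n) (a : ZMod n) :
    cyclicArc k (a + 1) = insert (a + k) ((cyclicArc k a).erase a) := by
  have ha : a + k ≠ a := fun h ↦
    add_natCast_notMem_cyclicArc hkn a (h.symm ▸ self_mem_cyclicArc hk a)
  symm
  refine eq_of_subset_of_card_le (fun x hx ↦ ?_) ?_
  · obtain ⟨hxa, hxk⟩ : x ≠ a ∧ (x - a).val ≤ k := by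
      obtain rfl | hx := mem_insert.1 hx
      · exact ⟨ha, by simp [ZMod.val_natCast_of_lt hkn]⟩
      · exact ⟨ne_of_mem_erase hx, (mem_cyclicArc.1 (mem_of_mem_erase hx)).le⟩
    rw [val_sub_of_ne hxa] at hxk
    exact mem_cyclicArc.2 hxk
  · have hnotMem : a + k ∉ (cyclicArc k a).erase a :=
      mt mem_of_mem_erase (add_natCast_notMem_cyclicArc hkn a)
    rw [card_insert_of_notMem hnotMem, card_erase_of_mem (self_mem_cyclicArc hk a),
      card_cyclicArc hkn.le, card_cyclicArc hkn.le, Nat.sub_add_cancel hk]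

/-- Katona's circle argument: after one arc is fixed, the remaining positions split into pairs of
disjoint arcs, and `X` meets each pair at most once. -/
theorem card_le_of_forall_not_disjoint_cyclicArc (hkn : 2 * k ≤ n) {X : Finset (ZMod n)}
    (hX : ∀ a ∈ X, ∀ b ∈ X, k ≤ (b - a).val → n < (b - a).val + k) : #X ≤ k := by
  obtain rfl | ⟨a, ha⟩ := X.eq_empty_or_nonempty
  · simp
  conv_rhs => rw [← card_range k]
  have hne : ∀ b ∈ X, ∀ c ∈ X, (b - a).val + n ≠ (c - a).val + k := by
    intro b hb c hc hbc
    have hval := ZMod.val_sub (a := c - a) (b := b - a) (by omega)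
    rw [sub_sub_sub_cancel_right] at hval
    have := hX b hb c hc (by omega)
    omega
  refine card_le_card_of_injOn
    (fun b ↦ if (b - a).val < k then (b - a).val else (b - a).val + k - n) ?_ ?_
  · intro b hb
    have := hX a ha b hb
    have := ZMod.val_lt (b - a)
    simp only [coe_range, Set.mem_Iio]
    split_ifs <;> omega
  · intro b hb c hc hbc
    have := hX a ha b hb
    have := hX a ha c hc
    have := hne b hb c hc
    have := hne c hc b hb
    refine sub_left_injective (ZMod.val_injective n ?_ : b - a = c - a)
    dsimp only at hbc ⊢
    split_ifs at hbc <;> omega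

theorem exists_mem_add_one_notMem {X : Finset (ZMod n)} (hX : X.Nonempty) (hne : #X < n) :
    ∃ a ∈ X, a + 1 ∉ X := by
  by_contra! hclosed
  obtain ⟨a, ha⟩ := hX
  have hadd (t : ℕ) : a + t ∈ X := by
    induction t with
    | zero => simpa using ha
    | succ t ih => simpa [add_assoc] using hclosed _ ih
  have huniv : X = univ := eq_univ_of_forall fun b ↦ by simpa using hadd (b - a).val
  simp [huniv, ZMod.card] at hne

end CyclicArc

section KatonaDefect
open Finset
open scoped BigOperators

variable {α : Type*} [DecidableEq α] {n : ℕ} [NeZero n] {k ψ : ℕ} {C : Finset (Finset α)}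

/-- The starting points of the length-`k` arcs which `σ`, seen as a cyclic ordering of `α`, maps
into the family `C`. -/
def arcStarts (k : ℕ) (C : Finset (Finset α)) (σ : ZMod n ≃ α) : Finset (ZMod n) :=
  {a | (cyclicArc k a).map σ.toEmbedding ∈ C}

theorem mem_arcStarts {σ : ZMod n ≃ α} {a : ZMod n} :
    a ∈ arcStarts k C σ ↔ (cyclicArc k a).map σ.toEmbedding ∈ C := by
  simp [arcStarts]

/-- The pairs of starting points of two arcs which are disjoint, because each starts at least `k`
steps after the other, and which `σ` maps into the family `C`. -/
def disjointArcPairs (k : ℕ) (C : Finset (Finset α)) (σ : ZMod n ≃ α) :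
    Finset (ZMod n × ZMod n) :=
  {p ∈ {p : ZMod n × ZMod n | k ≤ (p.2 - p.1).val ∧ (p.2 - p.1).val + k ≤ n} |
    (cyclicArc k p.1).map σ.toEmbedding ∈ C ∧ (cyclicArc k p.2).map σ.toEmbedding ∈ C}

theorem card_arcStarts_le (hkn : 2 * k ≤ n) {σ : ZMod n ≃ α} (hσ : disjointArcPairs k C σ = ∅) :
    #(arcStarts k C σ) ≤ k := by
  refine card_le_of_forall_not_disjoint_cyclicArc hkn fun a ha b hb hab ↦ ?_
  by_contra! hba
  have : (a, b) ∈ disjointArcPairs k C σ := by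
    simp [disjointArcPairs, hab, hba, mem_arcStarts.1 ha, mem_arcStarts.1 hb]
  simp [hσ] at this

variable [Fintype α]

variable (n k C) in
/-- The probability that a random cyclic ordering of `α` does not have exactly `k` arcs of length
`k` in `C`. It vanishes when `C` is a full star. -/
noncomputable def katonaDefect : ℝ :=
  uniformProb fun σ : ZMod n ≃ α ↦ #(arcStarts k C σ) ≠ k

theorem katonaDefect_le_sub_expect_add_expect (hkn : 2 * k ≤ n) [Nonempty (ZMod n ≃ α)] :
    katonaDefect n k C ≤ k - 𝔼 σ : ZMod n ≃ α, (#(arcStarts k C σ) : ℝ) +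
      (n + 1) * 𝔼 σ : ZMod n ≃ α, (#(disjointArcPairs k C σ) : ℝ) := by
  rw [← Fintype.expect_const (ι := ZMod n ≃ α) (k : ℝ), ← expect_sub_distrib, mul_expect,
    ← expect_add_distrib]
  refine expect_le_expect fun σ _ ↦ ?_
  obtain hσ | hσ := (disjointArcPairs k C σ).eq_empty_or_nonempty
  · have hle := card_arcStarts_le hkn hσ
    simp only [hσ, card_empty, Nat.cast_zero, mul_zero, add_zero]
    split_ifs with hne
    · rw [le_sub_iff_add_le']
      exact_mod_cast lt_of_le_of_ne hle hne
    · exact sub_nonneg.2 (by exact_mod_cast hle)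
  · have hpos : (1 : ℝ) ≤ #(disjointArcPairs k C σ) := by exact_mod_cast hσ.card_pos
    have hle : (#(arcStarts k C σ) : ℝ) ≤ n := by
      exact_mod_cast (card_le_univ _).trans_eq (ZMod.card n)
    have hmul : (n + 1 : ℝ) ≤ (n + 1) * #(disjointArcPairs k C σ) :=
      le_mul_of_one_le_right (by positivity) hpos
    split_ifs <;> linarith [(k.cast_nonneg : (0 : ℝ) ≤ k)]

theorem expect_card_arcStarts_mul_choose (hkn : k ≤ n) [Nonempty (ZMod n ≃ α)]
    (hC : (C : Set (Finset α)).Sized k) :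
    (𝔼 σ : ZMod n ≃ α, (#(arcStarts k C σ) : ℝ)) * n.choose k = n * #C := by
  have hprob (a : ZMod n) := uniformProb_map_mem_mul_choose hC (card_cyclicArc hkn a)
  simp only [ZMod.card] at hprob
  simp [arcStarts, ← sum_uniformProb, sum_mul, hprob, ZMod.card]

theorem expect_card_disjointArcPairs_mul_choose_le (hkn : k ≤ n) [Nonempty (ZMod n ≃ α)]
    (hψ : ∀ u ∈ C, #{v ∈ C | Disjoint u v} ≤ ψ) :
    (𝔼 σ : ZMod n ≃ α, (#(disjointArcPairs k C σ) : ℝ)) * (n - k).choose k ≤ n ^ 2 * ψ := by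
  simp only [disjointArcPairs]
  rw [← sum_uniformProb, sum_mul]
  refine (sum_le_card_nsmul _ _ (ψ : ℝ) fun p hp ↦ ?_).trans ?_
  · obtain ⟨hle, hle'⟩ := (mem_filter.1 hp).2
    have := uniformProb_map_mem_and_map_mem_mul_choose_le hψ (card_cyclicArc hkn p.1)
      (card_cyclicArc hkn p.2) (disjoint_cyclicArc hle hle')
    rwa [ZMod.card] at this
  · rw [nsmul_eq_mul]
    gcongr
    exact_mod_cast (card_le_univ _).trans_eq (by simp [ZMod.card, pow_two])

end KatonaDefect

section Exchange
open Finset Equiv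

variable {α β : Type*} {C : Finset (Finset α)} {P Q : Finset β} {i j : β}

theorem mem_and_notMem_of_card_eq_of_mem_iff_mem {X Y : Finset β} (hcard : #X = #Y)
    (hXY : ∀ x, x ≠ i → x ≠ j → (x ∈ X ↔ x ∈ Y)) (hi : i ∈ X) (hi' : i ∉ Y) :
    j ∈ Y ∧ j ∉ X := by
  classical
  have hpos : 0 < #(Y \ X) := by
    rw [← card_sdiff_comm hcard]
    exact card_pos.2 ⟨i, mem_sdiff.2 ⟨hi, hi'⟩⟩
  obtain ⟨x, hx⟩ := card_pos.1 hpos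
  rw [mem_sdiff] at hx
  obtain rfl : x = j := by
    by_contra hxj
    exact hx.2 ((hXY x (fun hxi ↦ hi' (hxi ▸ hx.1)) hxj).2 hx.1)
  exact hx

variable [DecidableEq β]

/-- The set `P`, placed in `α` by `σ`, belongs to `C` when completed by `i` but not when completed
by `j`. -/
def IsExchange (C : Finset (Finset α)) (P : Finset β) (i j : β) (σ : β ≃ α) : Prop :=
  (insert i P).map σ.toEmbedding ∈ C ∧ (insert j P).map σ.toEmbedding ∉ C

instance [DecidableEq α] (σ : β ≃ α) : Decidable (IsExchange C P i j σ) :=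
  inferInstanceAs (Decidable (_ ∧ _))

theorem isExchange_trans (e : Perm β) (σ : β ≃ α) :
    IsExchange C P i j (e.trans σ) ↔ IsExchange C (P.map e.toEmbedding) (e i) (e j) σ := by
  rw [IsExchange, IsExchange, map_trans_toEmbedding, map_trans_toEmbedding,
    map_insert e.toEmbedding, map_insert e.toEmbedding]
  rfl

theorem map_swap_of_mem_iff_mem (h : i ∈ P ↔ j ∈ P) : P.map (swap i j).toEmbedding = P := by
  ext x
  rw [mem_map_equiv, symm_swap]
  obtain rfl | hi := eq_or_ne x i
  · simpa using h.symm
  obtain rfl | hj := eq_or_ne x j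
  · simpa using h
  rw [swap_apply_of_ne_of_ne hi hj]

theorem map_swap_insert_left (hi : i ∉ P) (hj : j ∉ P) :
    (insert i P).map (swap i j).toEmbedding = insert j P := by
  simp [map_insert, map_swap_of_mem_iff_mem (iff_of_false hi hj)]

theorem map_swap_insert_right (hi : i ∉ P) (hj : j ∉ P) :
    (insert j P).map (swap i j).toEmbedding = insert i P := by
  rw [swap_comm, map_swap_insert_left hj hi]

theorem isExchange_iff_map_swap_notMem {σ : β ≃ α} (hi : i ∉ P) (hj : j ∉ P) :
    IsExchange C P i j σ ↔ (insert i P).map σ.toEmbedding ∈ C ∧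
      (insert i P).map ((swap i j).trans σ).toEmbedding ∉ C := by
  rw [IsExchange, map_trans_toEmbedding, map_swap_insert_left hi hj]

theorem isExchange_iff_map_swap_mem {σ : β ≃ α} (hi : i ∉ P) (hj : j ∉ P) :
    IsExchange C P i j σ ↔ (insert j P).map ((swap i j).trans σ).toEmbedding ∈ C ∧
      (insert j P).map σ.toEmbedding ∉ C := by
  rw [IsExchange, map_trans_toEmbedding, map_swap_insert_right hi hj]

theorem exists_perm_apply_eq_and_map_eq {i' j' : β} {P' Q' : Finset β}
    (hP : #P = #P') (hQ : #Q = #Q') (hij : i ≠ j) (hPQ : Disjoint P Q)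
    (hi : i ∉ P ∪ Q) (hj : j ∉ P ∪ Q) (hij' : i' ≠ j') (hPQ' : Disjoint P' Q')
    (hi' : i' ∉ P' ∪ Q') (hj' : j' ∉ P' ∪ Q') :
    ∃ e : Perm β, e i = i' ∧ e j = j' ∧ P.map e.toEmbedding = P' ∧ Q.map e.toEmbedding = Q' := by
  rw [notMem_union] at hi hj hi' hj'
  obtain ⟨e, he⟩ := exists_perm_map_eq (P := ![{i}, {j}, P, Q]) (Q := ![{i'}, {j'}, P', Q'])
    (by simp [Pairwise, Fin.forall_fin_succ, hij, hij.symm, hPQ, hPQ.symm, hi, hj])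
    (by simp [Pairwise, Fin.forall_fin_succ, hij', hij'.symm, hPQ', hPQ'.symm, hi', hj'])
    (by simp [Fin.forall_fin_succ, hP, hQ])
  refine ⟨e, ?_⟩
  simpa [Fin.forall_fin_succ] using he

end Exchange

section ExchangeProbability
open Finset Equiv
open scoped BigOperators

variable {α : Type*} [DecidableEq α] {n : ℕ} [NeZero n] {k m : ℕ} {C : Finset (Finset α)}

theorem disjoint_cyclicArc_neg_zero (hkn : 2 * k ≤ n) :
    Disjoint (cyclicArc k (-(k : ZMod n))) (cyclicArc k 0) := by
  have hn := NeZero.pos n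
  have hval : (0 - -k : ZMod n).val = k := by simp [ZMod.val_natCast_of_lt (by omega : k < n)]
  exact disjoint_cyclicArc hval.ge (by omega)

theorem neg_one_mem_cyclicArc_neg (hk : 0 < k) (hkn : k ≤ n) :
    -1 ∈ cyclicArc k (-(k : ZMod n)) := by
  have hcast : (-1 - -k : ZMod n) = (k - 1 : ℕ) := by
    rw [Nat.cast_sub hk]
    push_cast
    ring
  rw [mem_cyclicArc, hcast, ZMod.val_natCast_of_lt (by omega)]
  omega

/-- Swapping the adjacent positions `-1` and `0` affects only the two disjoint arcs which these
positions bound. So if the number of arcs in `C` is the same before and after, losing one of the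
two arcs must be compensated by gaining the other. -/
theorem isExchange_of_card_arcStarts_eq {σ : ZMod n ≃ α} (hk : 0 < k) (hkn : 2 * k ≤ n)
    (hcard : #(arcStarts k C σ) = #(arcStarts k C ((swap (-1) 0).trans σ)))
    (hσ : IsExchange C ((cyclicArc k (-(k : ZMod n))).erase (-1)) (-1) 0 σ) :
    IsExchange C ((cyclicArc k (0 : ZMod n)).erase 0) (-1) 0 σ := by
  have hdisj := disjoint_left.1 (disjoint_cyclicArc_neg_zero hkn)
  have hneg := neg_one_mem_cyclicArc_neg hk (by omega : k ≤ n)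
  have hzero := self_mem_cyclicArc hk (0 : ZMod n)
  rw [isExchange_iff_map_swap_notMem (notMem_erase _ _)
    (mt mem_of_mem_erase fun h ↦ hdisj h hzero), insert_erase hneg, ← mem_arcStarts,
    ← mem_arcStarts] at hσ
  rw [isExchange_iff_map_swap_mem (mt mem_of_mem_erase (hdisj hneg)) (notMem_erase _ _),
    insert_erase hzero, ← mem_arcStarts, ← mem_arcStarts]
  refine mem_and_notMem_of_card_eq_of_mem_iff_mem hcard (fun a hak ha ↦ ?_) hσ.1 hσ.2
  have hiff : (-1 : ZMod n) ∈ cyclicArc k a ↔ 0 ∈ cyclicArc k a := by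
    have := add_one_mem_cyclicArc_iff (k := k) (a := a) (x := -1)
    rw [neg_add_cancel] at this
    exact (this ha.symm fun h ↦ hak (eq_neg_of_add_eq_zero_left h.symm)).symm
  rw [mem_arcStarts, mem_arcStarts, map_trans_toEmbedding, map_swap_of_mem_iff_mem hiff]

variable [Fintype α] {P Q : Finset (ZMod n)} {i j : ZMod n}

theorem uniformProb_isExchange_eq {i' j' : ZMod n} {P' : Finset (ZMod n)} (hP : #P = #P')
    (hij : i ≠ j) (hi : i ∉ P) (hj : j ∉ P) (hij' : i' ≠ j') (hi' : i' ∉ P') (hj' : j' ∉ P') :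
    uniformProb (IsExchange C P i j) = uniformProb (IsExchange C P' i' j') := by
  obtain ⟨e, rfl, rfl, rfl, -⟩ := exists_perm_apply_eq_and_map_eq (Q := ∅) (Q' := ∅) hP rfl hij
    (by simp) (by simpa) (by simpa) hij' (by simp) (by simpa) (by simpa)
  rw [← uniformProb_trans e (IsExchange C P i j)]
  simp only [isExchange_trans]

theorem one_sub_katonaDefect_le_mul_uniformProb_isExchange (hm : m + 1 < n) (hP : #P = m)
    (hij : i ≠ j) (hi : i ∉ P) (hj : j ∉ P) [Nonempty (ZMod n ≃ α)] :
    1 - katonaDefect n (m + 1) C ≤ n * uniformProb (IsExchange C P i j) := by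
  let R (a : ZMod n) : Finset (ZMod n) := (cyclicArc (m + 1) a).erase a
  have hR (a : ZMod n) : uniformProb (IsExchange C (R a) a (a + (m + 1 : ℕ))) =
      uniformProb (IsExchange C P i j) := by
    have hmem := self_mem_cyclicArc m.succ_pos a
    have hnotMem := add_natCast_notMem_cyclicArc hm a
    refine uniformProb_isExchange_eq ?_ (fun h ↦ hnotMem (h ▸ hmem)) (notMem_erase _ _)
      (mt mem_of_mem_erase hnotMem) hij hi hj
    rw [card_erase_of_mem hmem, card_cyclicArc hm.le, hP, Nat.add_sub_cancel]
  have hex (σ : ZMod n ≃ α) (hσ : #(arcStarts (m + 1) C σ) = m + 1) :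
      ∃ a ∈ univ, IsExchange C (R a) a (a + (m + 1 : ℕ)) σ := by
    obtain ⟨a, ha, ha'⟩ := exists_mem_add_one_notMem (card_pos.1 (by omega)) (hσ.trans_lt hm)
    rw [mem_arcStarts] at ha ha'
    rw [cyclicArc_add_one m.succ_pos hm] at ha'
    exact ⟨a, mem_univ _, by rwa [insert_erase (self_mem_cyclicArc m.succ_pos a)], ha'⟩
  have hsum := uniformProb_le_sum hex
  simp only [hR, sum_const, card_univ, ZMod.card, nsmul_eq_mul] at hsum
  have hone : (1 : ℝ) ≤ katonaDefect n (m + 1) C +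
      uniformProb fun σ : ZMod n ≃ α ↦ #(arcStarts (m + 1) C σ) = m + 1 := by
    rw [← uniformProb_eq_one (Ω := ZMod n ≃ α) (p := fun _ ↦ True) fun _ ↦ trivial]
    exact uniformProb_le_add fun σ _ ↦ ne_or_eq _ _
  linarith

variable (C i j) in
/-- The probability that `P` gives an exchange and `Q` does not. -/
noncomputable def exchangeLoss (P Q : Finset (ZMod n)) : ℝ :=
  uniformProb fun σ : ZMod n ≃ α ↦ IsExchange C P i j σ ∧ ¬IsExchange C Q i j σ

theorem exchangeLoss_self (P : Finset (ZMod n)) : exchangeLoss C i j P P = 0 :=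
  uniformProb_eq_zero fun _ h ↦ h.2 h.1

theorem exchangeLoss_triangle (P Q R : Finset (ZMod n)) :
    exchangeLoss C i j P R ≤ exchangeLoss C i j P Q + exchangeLoss C i j Q R :=
  uniformProb_le_add fun _ _ ↦ by tauto

theorem exchangeLoss_map (e : Perm (ZMod n)) :
    exchangeLoss C (e i) (e j) (P.map e.toEmbedding) (Q.map e.toEmbedding) =
      exchangeLoss C i j P Q := by
  simp only [exchangeLoss, ← isExchange_trans]
  exact uniformProb_trans e fun σ ↦ IsExchange C P i j σ ∧ ¬IsExchange C Q i j σ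

theorem exchangeLoss_cyclicArc_le (hk : 0 < k) (hkn : 2 * k ≤ n) :
    exchangeLoss C (-1) 0 ((cyclicArc k (-(k : ZMod n))).erase (-1))
      ((cyclicArc k 0).erase 0) ≤ 2 * katonaDefect n k C := by
  have hswap : uniformProb (fun σ : ZMod n ≃ α ↦ #(arcStarts k C ((swap (-1) 0).trans σ)) ≠ k) =
      katonaDefect n k C :=
    uniformProb_trans (swap (-1) 0) fun σ : ZMod n ≃ α ↦ #(arcStarts k C σ) ≠ k
  rw [two_mul]
  nth_rw 2 [← hswap]
  refine uniformProb_le_add fun σ hσ ↦ ?_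
  by_contra! hcard
  exact hσ.2 (isExchange_of_card_arcStarts_eq hk hkn (hcard.1.trans hcard.2.symm) hσ.1)

theorem exchangeLoss_le_of_disjoint (hmn : 2 * (m + 1) ≤ n) (hP : #P = m) (hQ : #Q = m)
    (hPQ : Disjoint P Q) (hij : i ≠ j) (hi : i ∉ P ∪ Q) (hj : j ∉ P ∪ Q) :
    exchangeLoss C i j P Q ≤ 2 * katonaDefect n (m + 1) C := by
  have hdisj := disjoint_cyclicArc_neg_zero hmn
  have hneg := neg_one_mem_cyclicArc_neg m.add_one_pos (by omega : m + 1 ≤ n)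
  have hzero := self_mem_cyclicArc m.add_one_pos (0 : ZMod n)
  have hneg' := disjoint_left.1 hdisj hneg
  have hzero' := disjoint_right.1 hdisj hzero
  have hne : (-1 : ZMod n) ≠ 0 := fun h ↦ hneg' (h ▸ hzero)
  have hcard {a x : ZMod n} (hx : x ∈ cyclicArc (m + 1) a) :
      #((cyclicArc (m + 1) a).erase x) = m := by
    rw [card_erase_of_mem hx, card_cyclicArc (by omega), Nat.add_sub_cancel]
  obtain ⟨e, rfl, rfl, rfl, rfl⟩ := exists_perm_apply_eq_and_map_eq
    ((hcard hneg).trans hP.symm) ((hcard hzero).trans hQ.symm) hne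
    (hdisj.mono (erase_subset _ _) (erase_subset _ _))
    (notMem_union.2 ⟨notMem_erase _ _, mt mem_of_mem_erase hneg'⟩)
    (notMem_union.2 ⟨mt mem_of_mem_erase hzero', notMem_erase _ _⟩) hij hPQ hi hj
  rw [exchangeLoss_map]
  exact exchangeLoss_cyclicArc_le m.add_one_pos hmn

theorem exchangeLoss_le_of_card_union_le (hmn : 2 * m + 3 ≤ n) (hP : #P = m) (hQ : #Q = m)
    (hPQ : #(P ∪ Q) ≤ m + 1) (hij : i ≠ j) (hi : i ∉ P ∪ Q) (hj : j ∉ P ∪ Q) :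
    exchangeLoss C i j P Q ≤ 4 * katonaDefect n (m + 1) C := by
  obtain ⟨Z, hZsub, hZ⟩ : ∃ Z ⊆ (insert i (insert j (P ∪ Q)))ᶜ, #Z = m := by
    refine exists_subset_card_eq ?_
    have h₁ := card_insert_le i (insert j (P ∪ Q))
    have h₂ := card_insert_le j (P ∪ Q)
    rw [card_compl, ZMod.card]
    omega
  rw [subset_compl_iff_disjoint_right, disjoint_insert_right, disjoint_insert_right,
    disjoint_union_right] at hZsub
  rw [notMem_union] at hi hj
  have hPZ : exchangeLoss C i j P Z ≤ 2 * katonaDefect n (m + 1) C :=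
    exchangeLoss_le_of_disjoint (by omega) hP hZ hZsub.2.2.1.symm hij
      (by simp [hi, hZsub]) (by simp [hj, hZsub])
  have hZQ : exchangeLoss C i j Z Q ≤ 2 * katonaDefect n (m + 1) C :=
    exchangeLoss_le_of_disjoint (by omega) hZ hQ hZsub.2.2.2 hij
      (by simp [hi, hZsub]) (by simp [hj, hZsub])
  linarith [exchangeLoss_triangle (C := C) (i := i) (j := j) P Z Q]

theorem exchangeLoss_le_card_sdiff_mul (hmn : 2 * m + 3 ≤ n) (hij : i ≠ j) (hP : #P = m)
    (hQ : #Q = m) (hi : i ∉ P ∪ Q) (hj : j ∉ P ∪ Q) :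
    exchangeLoss C i j P Q ≤ #(P \ Q) * (4 * katonaDefect n (m + 1) C) := by
  induction hd : #(P \ Q) generalizing P with
  | zero =>
    have hsub : P ⊆ Q := sdiff_eq_empty_iff_subset.1 (card_eq_zero.1 hd)
    simp [eq_of_subset_of_card_le hsub (by omega), exchangeLoss_self]
  | succ d ih =>
    obtain ⟨p, hp⟩ := card_pos.1 (hd.trans_gt d.succ_pos)
    obtain ⟨q, hq⟩ := card_pos.1
      ((card_sdiff_comm (hQ.trans hP.symm)).trans_gt (card_pos.2 ⟨p, hp⟩))
    obtain ⟨⟨hpP, -⟩, hqQ, hqP⟩ := And.intro (mem_sdiff.1 hp) (mem_sdiff.1 hq)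
    let R := insert q (P.erase p)
    have hR : #R = m := by
      rw [card_insert_of_notMem (mt mem_of_mem_erase hqP), card_erase_add_one hpP, hP]
    have hRQ : #(R \ Q) = d := by
      rw [insert_sdiff_of_mem _ hqQ, erase_sdiff_comm, card_erase_of_mem hp, hd, Nat.add_sub_cancel]
    have hRsub : R ⊆ insert q P := insert_subset_insert q (erase_subset p P)
    have hPR : P ∪ R ⊆ insert q P := union_subset (subset_insert q P) hRsub
    have hins : insert q P ⊆ P ∪ Q := insert_subset (mem_union_right P hqQ) subset_union_left
    have hRQsub : R ∪ Q ⊆ P ∪ Q := union_subset (hRsub.trans hins) subset_union_right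
    have hcard : #(P ∪ R) ≤ m + 1 := (card_le_card hPR).trans (hP ▸ card_insert_le q P)
    have hstep : exchangeLoss C i j P R ≤ 4 * katonaDefect n (m + 1) C :=
      exchangeLoss_le_of_card_union_le hmn hP hR hcard hij (mt (hPR.trans hins ·) hi)
        (mt (hPR.trans hins ·) hj)
    have hrest := ih hR (mt (hRQsub ·) hi) (mt (hRQsub ·) hj) hRQ
    calc exchangeLoss C i j P Q ≤ exchangeLoss C i j P R + exchangeLoss C i j R Q :=
          exchangeLoss_triangle P R Q
      _ ≤ (d + 1 : ℕ) * (4 * katonaDefect n (m + 1) C) := by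
        push_cast
        linarith

end ExchangeProbability

section Stability
open Finset
open scoped BigOperators

variable {α : Type*} [Fintype α] [DecidableEq α] {n m ψ e : ℕ} {C : Finset (Finset α)}

/-- The `m`-sets avoiding `x` and `y` which `x` does not complete to a member of `C`, or which `y`
does. If `C` is the star at `x ≠ y`, there are none. -/
def nonExchanging (C : Finset (Finset α)) (m : ℕ) (x y : α) : Finset (Finset α) :=
  {R ∈ ({x, y}ᶜ : Finset α).powersetCard m | ¬(insert x R ∈ C ∧ insert y R ∉ C)}

theorem card_nonExchanging_map {β : Type*} [Fintype β] [DecidableEq β] (σ : β ≃ α) (i j : β) :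
    #(nonExchanging C m (σ i) (σ j)) =
      #{P ∈ ({i, j}ᶜ : Finset β).powersetCard m | ¬IsExchange C P i j σ} := by
  have hmap : ({i, j}ᶜ : Finset β).map σ.toEmbedding = {σ i, σ j}ᶜ := by
    ext x
    simp [mem_map_equiv, Equiv.symm_apply_eq]
  simp only [IsExchange, map_insert, Equiv.coe_toEmbedding]
  rw [card_filter_powersetCard_map σ _ m fun R ↦ ¬(insert (σ i) R ∈ C ∧ insert (σ j) R ∉ C), hmap]
  rfl

theorem mul_uniformProb_isExchange_le [NeZero n] {P : Finset (ZMod n)} {i j : ZMod n} {b : ℕ}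
    (hmn : 2 * m + 3 ≤ n) (hij : i ≠ j) (hP : #P = m) (hi : i ∉ P) (hj : j ∉ P)
    (hb : ∀ σ : ZMod n ≃ α, b ≤ #(nonExchanging C m (σ i) (σ j))) :
    b * uniformProb (IsExchange C P i j) ≤
      (n - 2).choose m * (m * (4 * katonaDefect n (m + 1) C)) := by
  have hnonneg : 0 ≤ katonaDefect n (m + 1) C := uniformProb_nonneg _
  have hloss : ∀ Q ∈ ({i, j}ᶜ : Finset (ZMod n)).powersetCard m,
      exchangeLoss C i j P Q ≤ m * (4 * katonaDefect n (m + 1) C) := by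
    intro Q hQ
    obtain ⟨hsub, hQm⟩ := mem_powersetCard.1 hQ
    have hiQ : i ∉ Q := fun h ↦ by simpa using hsub h
    have hjQ : j ∉ Q := fun h ↦ by simpa using hsub h
    refine (exchangeLoss_le_card_sdiff_mul hmn hij hP hQm (by simp [hi, hiQ])
      (by simp [hj, hjQ])).trans ?_
    gcongr
    exact (card_le_card sdiff_subset).trans_eq hP
  have hexchange : b * uniformProb (IsExchange C P i j) ≤
      ∑ Q ∈ ({i, j}ᶜ : Finset (ZMod n)).powersetCard m, exchangeLoss C i j P Q := by
    refine mul_uniformProb_le_sum fun σ hσ ↦ ?_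
    simpa only [hσ, true_and, ← card_nonExchanging_map] using hb σ
  refine hexchange.trans ((sum_le_card_nsmul _ _ _ hloss).trans_eq ?_)
  rw [card_powersetCard, card_compl, ZMod.card, card_pair hij, nsmul_eq_mul]

theorem exists_card_nonExchanging_le [NeZero n] [Nonempty (ZMod n ≃ α)] (hmn : 2 * m + 3 ≤ n)
    (hdefect : katonaDefect n (m + 1) C ≤ 1 / 2) :
    ∃ x y : α, (#(nonExchanging C m x y) : ℝ) ≤
      4 * n ^ 2 * katonaDefect n (m + 1) C * (n - 2).choose m := by
  obtain ⟨i, j, hij⟩ : ∃ i j : ZMod n, i ≠ j :=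
    Fintype.exists_pair_of_one_lt_card (by rw [ZMod.card]; omega)
  obtain ⟨P, hsub, hP⟩ : ∃ P ⊆ ({i, j}ᶜ : Finset (ZMod n)), #P = m :=
    exists_subset_card_eq (by rw [card_compl, ZMod.card, card_pair hij]; omega)
  have hi : i ∉ P := fun h ↦ by simpa using hsub h
  have hj : j ∉ P := fun h ↦ by simpa using hsub h
  have σ₀ := Classical.arbitrary (ZMod n ≃ α)
  obtain ⟨⟨x, y⟩, -, hmin⟩ := (univ.offDiag : Finset (α × α)).exists_min_image
    (fun p ↦ #(nonExchanging C m p.1 p.2)) ⟨(σ₀ i, σ₀ j), by simpa using hij⟩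
  refine ⟨x, y, ?_⟩
  have hle := mul_uniformProb_isExchange_le hmn hij hP hi hj fun σ : ZMod n ≃ α ↦
    hmin (σ i, σ j) (by simpa using hij)
  have hprob := one_sub_katonaDefect_le_mul_uniformProb_isExchange (C := C) (by omega) hP hij hi hj
  have hnonneg : 0 ≤ katonaDefect n (m + 1) C := uniformProb_nonneg _
  have hmn' : (2 * m : ℝ) ≤ n := by exact_mod_cast (by omega : 2 * m ≤ n)
  set b := #(nonExchanging C m x y)
  calc (b : ℝ) ≤ b * (2 * (n * uniformProb (IsExchange C P i j))) :=
        le_mul_of_one_le_right (by positivity) (by linarith)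
    _ = 2 * n * (b * uniformProb (IsExchange C P i j)) := by ring
    _ ≤ 2 * n * ((n - 2).choose m * (m * (4 * katonaDefect n (m + 1) C))) := by gcongr
    _ = 4 * n * (2 * m) * katonaDefect n (m + 1) C * (n - 2).choose m := by ring
    _ ≤ 4 * n * n * katonaDefect n (m + 1) C * (n - 2).choose m := by gcongr
    _ = 4 * n ^ 2 * katonaDefect n (m + 1) C * (n - 2).choose m := by ring

theorem card_filter_notMem_mul_le_card_nonExchanging_mul (hC : (C : Set (Finset α)).Sized (m + 1))
    (hψ : ∀ u ∈ C, #{v ∈ C | Disjoint u v} ≤ ψ) (hn : Fintype.card α = n) (x y : α) :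
    #{v ∈ C | x ∉ v} * ((n - (m + 3)).choose m - ψ) ≤
      #(nonExchanging C m x y) * (n - (m + 1)).choose (m + 1) := by
  refine card_mul_le_card_mul (fun v R ↦ Disjoint v R) (fun v hv ↦ ?_) fun R hR ↦ ?_
  · obtain ⟨hv, hxv⟩ := mem_filter.1 hv
    let 𝓡 := (insert x (insert y v))ᶜ.powersetCard m
    have mem_𝓡 {R} (hR : R ∈ 𝓡) : (x ∉ R ∧ y ∉ R ∧ Disjoint v R) ∧ #R = m := by
      rwa [mem_powersetCard, subset_compl_iff_disjoint_left, disjoint_insert_left,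
        disjoint_insert_left] at hR
    have h𝓡 : (n - (m + 3)).choose m ≤ #𝓡 := by
      rw [card_powersetCard, card_compl, hn]
      have h₁ := card_insert_le x (insert y v)
      have h₂ := card_insert_le y v
      have h₃ := hC hv
      exact Nat.choose_le_choose m (by omega)
    have hinsert : #{R ∈ 𝓡 | insert x R ∈ C} ≤ ψ := by
      refine (card_le_card_of_injOn (insert x) (fun R hR ↦ ?_) ?_).trans (hψ v hv)
      · obtain ⟨hR, hxR⟩ := mem_filter.1 hR
        simpa [hxR, hxv] using (mem_𝓡 hR).1.2.2
      · exact insert_erase_invOn.2.injOn.mono fun R hR ↦ (mem_𝓡 (mem_filter.1 hR).1).1.1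
    refine (Nat.sub_le_sub_right h𝓡 ψ).trans (Nat.sub_le_of_le_add ?_)
    rw [← card_filter_add_card_filter_not (s := 𝓡) (insert x · ∈ C), add_comm]
    refine add_le_add (card_le_card fun R hR ↦ ?_) hinsert
    obtain ⟨hR, hxR⟩ := mem_filter.1 hR
    obtain ⟨⟨hx, hy, hdisj⟩, hcard⟩ := mem_𝓡 hR
    rw [mem_bipartiteAbove, nonExchanging, mem_filter, mem_powersetCard,
      subset_compl_iff_disjoint_left, disjoint_insert_left, disjoint_singleton_left]
    exact ⟨⟨⟨⟨hx, hy⟩, hcard⟩, fun h ↦ hxR h.1⟩, hdisj⟩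
  · rw [nonExchanging, mem_filter, mem_powersetCard, subset_compl_iff_disjoint_left,
      disjoint_insert_left] at hR
    obtain ⟨⟨⟨hxR, -⟩, hcard⟩, -⟩ := hR
    rw [← hn, ← hcard, ← card_insert_of_notMem hxR, ← card_compl, ← card_powersetCard]
    refine card_le_card fun v hv ↦ ?_
    obtain ⟨hv, hdisj⟩ := (mem_bipartiteBelow _).1 hv
    obtain ⟨hv, hxv⟩ := mem_filter.1 hv
    rw [mem_powersetCard, subset_compl_iff_disjoint_right, disjoint_insert_right]
    exact ⟨⟨hxv, hdisj⟩, by rw [hC hv, card_insert_of_notMem hxR, hcard]⟩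

theorem choose_succ_le_sq_mul_choose {l m : ℕ} (hml : m ≤ l) :
    (l + 2).choose (m + 1) ≤ (l + 2) ^ 2 * l.choose m := by
  have h₁ : (l + 2).choose (m + 1) ≤ (l + 2) * (l + 1).choose m := by
    rw [Nat.add_one_mul_choose_eq]
    exact Nat.le_mul_of_pos_right _ m.succ_pos
  have h₂ : (l + 1).choose m ≤ l.choose m * (l + 1) := by
    rw [Nat.choose_mul_succ_eq]
    exact Nat.le_mul_of_pos_right _ (by omega)
  calc (l + 2).choose (m + 1) ≤ (l + 2) * (l.choose m * (l + 1)) := by grw [h₁, h₂]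
    _ ≤ (l + 2) * (l.choose m * (l + 2)) := by gcongr; omega
    _ = (l + 2) ^ 2 * l.choose m := by ring

theorem sub_expect_card_arcStarts_mul_le_one [NeZero n] [Nonempty (ZMod n ≃ α)] (hmn : m + 1 ≤ n)
    (hC : (C : Set (Finset α)).Sized (m + 1)) (he : 2 ^ 9 * n ^ 6 * e ≤ (n - 1).choose m)
    (hCe : (n - 1).choose m ≤ #C + e) :
    ((m + 1 : ℕ) - 𝔼 σ : ZMod n ≃ α, (#(arcStarts (m + 1) C σ) : ℝ)) * (2 ^ 9 * n ^ 5) ≤ 1 := by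
  have hX := expect_card_arcStarts_mul_choose (α := α) hmn hC
  set x := 𝔼 σ : ZMod n ≃ α, (#(arcStarts (m + 1) C σ) : ℝ)
  have hstar : n * (n - 1).choose m = n.choose (m + 1) * (m + 1) := by
    simpa only [Nat.sub_add_cancel NeZero.one_le] using Nat.add_one_mul_choose_eq (n - 1) m
  have hle : (n - 1).choose m ≤ n.choose (m + 1) := by
    rw [← Nat.sub_add_cancel (NeZero.one_le : 1 ≤ n), Nat.choose_succ_succ]
    exact Nat.le_add_right _ _
  refine le_of_mul_le_mul_right ?_ (show (0 : ℝ) < n.choose (m + 1) by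
    exact_mod_cast Nat.choose_pos hmn)
  calc ((m + 1 : ℕ) - x) * (2 ^ 9 * n ^ 5) * (n.choose (m + 1) : ℝ)
      = ((n.choose (m + 1) * (m + 1) : ℕ) - x * (n.choose (m + 1) : ℝ)) * (2 ^ 9 * n ^ 5) := by
        push_cast
        ring
    _ = n * (((n - 1).choose m : ℝ) - #C) * (2 ^ 9 * n ^ 5) := by
        rw [hX, ← hstar]
        push_cast
        ring
    _ ≤ (n : ℝ) * e * (2 ^ 9 * n ^ 5) := by
        gcongr
        rw [sub_le_iff_le_add']
        exact_mod_cast hCe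
    _ = (2 ^ 9 * n ^ 6 * e : ℕ) := by
        push_cast
        ring
    _ ≤ 1 * (n.choose (m + 1) : ℝ) := by
        rw [one_mul]
        exact_mod_cast he.trans hle

theorem expect_card_disjointArcPairs_mul_le_one [NeZero n] [Nonempty (ZMod n ≃ α)] {k : ℕ}
    (hkn : 2 * k ≤ n) (hψ : ∀ u ∈ C, #{v ∈ C | Disjoint u v} ≤ ψ)
    (hψD : ψ * (2 ^ 10 * n ^ 8) ≤ (n - k).choose k) :
    (𝔼 σ : ZMod n ≃ α, (#(disjointArcPairs k C σ) : ℝ)) * (2 ^ 10 * n ^ 6) ≤ 1 := by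
  have hY := expect_card_disjointArcPairs_mul_choose_le (α := α) (by omega : k ≤ n) hψ
  set y := 𝔼 σ : ZMod n ≃ α, (#(disjointArcPairs k C σ) : ℝ)
  refine le_of_mul_le_mul_right ?_ (show (0 : ℝ) < (n - k).choose k by
    exact_mod_cast Nat.choose_pos (by omega))
  calc y * (2 ^ 10 * n ^ 6) * ((n - k).choose k : ℝ)
      = y * ((n - k).choose k : ℝ) * (2 ^ 10 * n ^ 6) := by ring
    _ ≤ (n : ℝ) ^ 2 * ψ * (2 ^ 10 * n ^ 6) := by gcongr
    _ = ((ψ * (2 ^ 10 * n ^ 8) : ℕ) : ℝ) := by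
        push_cast
        ring
    _ ≤ 1 * ((n - k).choose k : ℝ) := by
        rw [one_mul]
        exact_mod_cast hψD

theorem katonaDefect_mul_le_one [NeZero n] [Nonempty (ZMod n ≃ α)] (hmn : 2 * (m + 1) ≤ n)
    (hC : (C : Set (Finset α)).Sized (m + 1)) (hψ : ∀ u ∈ C, #{v ∈ C | Disjoint u v} ≤ ψ)
    (hψD : ψ * (2 ^ 10 * n ^ 8) ≤ (n - (m + 1)).choose (m + 1))
    (he : 2 ^ 9 * n ^ 6 * e ≤ (n - 1).choose m) (hCe : (n - 1).choose m ≤ #C + e) :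
    katonaDefect n (m + 1) C * (2 ^ 8 * n ^ 5) ≤ 1 := by
  have hx := sub_expect_card_arcStarts_mul_le_one (α := α) (by omega) hC he hCe
  have hy := expect_card_disjointArcPairs_mul_le_one (α := α) hmn hψ hψD
  have hle := katonaDefect_le_sub_expect_add_expect (α := α) (C := C) hmn
  set x := 𝔼 σ : ZMod n ≃ α, (#(arcStarts (m + 1) C σ) : ℝ)
  have hy₀ : 0 ≤ 𝔼 σ : ZMod n ≃ α, (#(disjointArcPairs (m + 1) C σ) : ℝ) :=
    expect_nonneg fun _ _ ↦ by positivity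
  set y := 𝔼 σ : ZMod n ≃ α, (#(disjointArcPairs (m + 1) C σ) : ℝ)
  have hn : (1 : ℝ) ≤ n := by exact_mod_cast NeZero.one_le
  calc katonaDefect n (m + 1) C * (2 ^ 8 * n ^ 5)
      ≤ ((m + 1 : ℕ) - x + (n + n) * y) * (2 ^ 8 * n ^ 5) := by
        gcongr
        exact hle.trans (by gcongr)
    _ = (((m + 1 : ℕ) - x) * (2 ^ 9 * n ^ 5) + y * (2 ^ 10 * n ^ 6)) / 2 := by ring
    _ ≤ 1 := by linarith

theorem card_filter_notMem_le (hn : Fintype.card α = n) (hmn : 2 * m + 3 ≤ n)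
    (hC : (C : Set (Finset α)).Sized (m + 1)) (hψ : ∀ u ∈ C, #{v ∈ C | Disjoint u v} ≤ ψ)
    (hψD : ψ * (2 ^ 10 * n ^ 8) ≤ (n - (m + 1)).choose (m + 1)) (x y : α) :
    #{v ∈ C | x ∉ v} ≤ 2 * n ^ 2 * #(nonExchanging C m x y) := by
  have hcount := card_filter_notMem_mul_le_card_nonExchanging_mul hC hψ hn x y
  have hD : (n - (m + 1)).choose (m + 1) ≤ n ^ 2 * (n - (m + 3)).choose m := by
    rw [show n - (m + 1) = n - (m + 3) + 2 by omega]
    refine (choose_succ_le_sq_mul_choose (by omega)).trans ?_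
    gcongr
    omega
  have hpos : 0 < (n - (m + 3)).choose m := Nat.choose_pos (by omega)
  set D' := (n - (m + 3)).choose m
  have hψD' : 2 * ψ ≤ D' := by
    have hpos : 0 < n := by omega
    refine le_of_mul_le_mul_left ?_ (pow_pos hpos 2)
    calc n ^ 2 * (2 * ψ) = ψ * (2 * n ^ 2) := by ring
      _ ≤ ψ * (2 ^ 10 * n ^ 8) := by gcongr <;> omega
      _ ≤ n ^ 2 * D' := hψD.trans hD
  refine le_of_mul_le_mul_right ?_ hpos
  calc #{v ∈ C | x ∉ v} * D' ≤ #{v ∈ C | x ∉ v} * (2 * (D' - ψ)) := by gcongr; omega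
    _ = 2 * (#{v ∈ C | x ∉ v} * (D' - ψ)) := by ring
    _ ≤ 2 * (#(nonExchanging C m x y) * (n ^ 2 * D')) := by grw [hcount, hD]
    _ = 2 * n ^ 2 * #(nonExchanging C m x y) * D' := by ring

theorem exists_mul_card_filter_notMem_le (hn : Fintype.card α = n) (hmn : 2 * m + 3 ≤ n)
    (hC : (C : Set (Finset α)).Sized (m + 1)) (hψ : ∀ u ∈ C, #{v ∈ C | Disjoint u v} ≤ ψ)
    (hψD : ψ * (2 ^ 10 * n ^ 8) ≤ (n - (m + 1)).choose (m + 1))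
    (he : 2 ^ 9 * n ^ 6 * e ≤ (n - 1).choose m) (hCe : (n - 1).choose m ≤ #C + e) :
    ∃ x, 32 * n * #{v ∈ C | x ∉ v} ≤ (n - 1).choose m := by
  have : NeZero n := ⟨by omega⟩
  have : Nonempty (ZMod n ≃ α) := Fintype.card_eq.1 (by rw [ZMod.card, hn])
  have hdefect := katonaDefect_mul_le_one (by omega) hC hψ hψD he hCe
  have hone : (1 : ℝ) ≤ n ^ 5 := one_le_pow₀ (by exact_mod_cast NeZero.one_le)
  have hnonneg : 0 ≤ katonaDefect n (m + 1) C := uniformProb_nonneg _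
  obtain ⟨x, y, hxy⟩ := exists_card_nonExchanging_le (α := α) (C := C) hmn (by nlinarith)
  have hc := card_filter_notMem_le hn hmn hC hψ hψD x y
  have hchoose : (n - 2).choose m ≤ (n - 1).choose m := Nat.choose_le_choose m (by omega)
  refine ⟨x, ?_⟩
  set b := #(nonExchanging C m x y)
  have hb : 2 ^ 6 * n ^ 3 * b ≤ (n - 1).choose m := by
    rify
    calc (2 ^ 6 * n ^ 3 * b : ℝ)
        ≤ 2 ^ 6 * n ^ 3 * (4 * n ^ 2 * katonaDefect n (m + 1) C * (n - 2).choose m) := by gcongr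
      _ = katonaDefect n (m + 1) C * (2 ^ 8 * n ^ 5) * (n - 2).choose m := by ring
      _ ≤ 1 * (n - 1).choose m := by gcongr
      _ = (n - 1).choose m := one_mul _
  calc 32 * n * #{v ∈ C | x ∉ v} ≤ 32 * n * (2 * n ^ 2 * b) := by gcongr
    _ = 2 ^ 6 * n ^ 3 * b := by ring
    _ ≤ (n - 1).choose m := hb

end Stability

section KneserContainers
open Finset

variable {α : Type*} [Fintype α] [DecidableEq α] {F T : Finset (Finset α)} {k ψ : ℕ}

/-- The container of an intersecting family of `k`-sets with fingerprint `T`, in the Kneser graph: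
the `k`-sets that meet every member of `T` and are disjoint from fewer than `ψ` such sets. -/
def kneserContainer (k ψ : ℕ) (T : Finset (Finset α)) : Finset (Finset α) :=
  {v ∈ univ.powersetCard k \ T.biUnion (powersetCard k ·ᶜ) |
    #(vᶜ.powersetCard k \ T.biUnion (powersetCard k ·ᶜ)) < ψ}

theorem sized_kneserContainer (k ψ : ℕ) (T : Finset (Finset α)) :
    (kneserContainer k ψ T : Set (Finset α)).Sized k := fun _ hv ↦
  (mem_powersetCard.1 (mem_sdiff.1 (mem_filter.1 (mem_coe.1 hv)).1).1).2

theorem card_filter_disjoint_kneserContainer_le {u : Finset α} (hu : u ∈ kneserContainer k ψ T) :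
    #{v ∈ kneserContainer k ψ T | Disjoint u v} ≤ ψ := by
  refine (card_le_card fun v hv ↦ ?_).trans (mem_filter.1 hu).2.le
  obtain ⟨hv, huv⟩ := mem_filter.1 hv
  exact mem_sdiff.2 ⟨mem_powersetCard.2 ⟨subset_compl_iff_disjoint_left.2 huv,
    sized_kneserContainer k ψ T hv⟩, (mem_sdiff.1 (mem_filter.1 hv).1).2⟩

theorem exists_subset_kneserContainer (hψ : 0 < ψ) (hsized : (F : Set (Finset α)).Sized k)
    (hF : (F : Set (Finset α)).Intersecting) :
    ∃ T ⊆ univ.powersetCard k, #T ≤ (Fintype.card α).choose k / ψ ∧ F ⊆ kneserContainer k ψ T := by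
  obtain ⟨T, hTF, hTcard, hT⟩ := exists_container (fun v : Finset α ↦ vᶜ.powersetCard k) F hψ
  have hFk : F ⊆ univ.powersetCard k := fun v hv ↦ mem_powersetCard.2 ⟨subset_univ v, hsized hv⟩
  refine ⟨T, hTF.trans hFk, ?_, fun v hv ↦ mem_filter.2 ⟨mem_sdiff.2 ⟨hFk hv, fun h ↦ ?_⟩, hT v hv⟩⟩
  · rw [Nat.le_div_iff_mul_le hψ, ← card_univ, ← card_powersetCard]
    exact hTcard.trans
      (card_le_card (biUnion_subset.2 fun u _ ↦ powersetCard_mono (subset_univ uᶜ)))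
  · obtain ⟨u, hu, hvu⟩ := mem_biUnion.1 h
    exact hF (hTF hu) hv (subset_compl_iff_disjoint_left.1 (mem_powersetCard.1 hvu).1)

end KneserContainers

section NontrivialIntersecting
open Finset

variable {α : Type*} [Fintype α] [DecidableEq α] {n m : ℕ}

theorem mul_mul_choose_div_add_le (hn : 0 < n) (hN : 2 ^ 10 * n ^ 7 ≤ (n - 1).choose m) :
    2 ^ 9 * n ^ 6 * (n * (n.choose (m + 1) / (2 ^ 10 * n ^ 8)) + n) ≤ (n - 1).choose m := by
  have hchoose : n.choose (m + 1) ≤ n * (n - 1).choose m := by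
    have h := Nat.add_one_mul_choose_eq (n - 1) m
    rw [Nat.sub_add_cancel hn] at h
    exact h ▸ Nat.le_mul_of_pos_right _ m.add_one_pos
  set b := n.choose (m + 1) / (2 ^ 10 * n ^ 8)
  have hbn : 2 ^ 10 * n ^ 7 * b ≤ (n - 1).choose m := by
    refine le_of_mul_le_mul_left ?_ hn
    calc n * (2 ^ 10 * n ^ 7 * b) = 2 ^ 10 * n ^ 8 * b := by ring
      _ ≤ n.choose (m + 1) := Nat.mul_div_le _ _
      _ ≤ n * (n - 1).choose m := hchoose
  linarith

theorem exists_mul_card_filter_notMem_le_or_exists_kneserContainer {F : Finset (Finset α)}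
    (hn : Fintype.card α = n) (hmn : 2 * m + 3 ≤ n)
    (hψD : 2 ^ 20 * n ^ 16 ≤ (n - (m + 1)).choose (m + 1))
    (hN : 2 ^ 10 * n ^ 7 ≤ (n - 1).choose m)
    (hsized : (F : Set (Finset α)).Sized (m + 1)) (hF : (F : Set (Finset α)).Intersecting) :
    (∃ x, 32 * n * #{A ∈ F | x ∉ A} ≤ (n - 1).choose m) ∨
    ∃ T ⊆ univ.powersetCard (m + 1), #T ≤ n.choose (m + 1) / (2 ^ 10 * n ^ 8) ∧
      F ⊆ kneserContainer (m + 1) (2 ^ 10 * n ^ 8) T ∧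
      #(kneserContainer (m + 1) (2 ^ 10 * n ^ 8) T) +
        n * (n.choose (m + 1) / (2 ^ 10 * n ^ 8)) + n ≤ (n - 1).choose m := by
  have hn₀ : 0 < n := by omega
  obtain ⟨T, hTU, hTcard, hFT⟩ :=
    exists_subset_kneserContainer (ψ := 2 ^ 10 * n ^ 8) (by positivity) hsized hF
  rw [hn] at hTcard
  refine or_iff_not_imp_right.2 fun hlarge ↦ ?_
  obtain ⟨x, hx⟩ := exists_mul_card_filter_notMem_le hn hmn (sized_kneserContainer _ _ T)
    (fun _ ↦ card_filter_disjoint_kneserContainer_le (ψ := 2 ^ 10 * n ^ 8))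
    (le_of_eq_of_le (by ring) hψD)
    (mul_mul_choose_div_add_le hn₀ hN) (not_le.1 fun h ↦ hlarge
      ⟨T, hTU, hTcard, hFT, by rwa [add_assoc]⟩).le
  exact ⟨x, (Nat.mul_le_mul_left _ (card_le_card (filter_subset_filter _ hFT))).trans hx⟩

theorem card_mul_two_pow_le_of_exists_near_star {s d N : ℕ} (𝓕 : Finset (Finset (Finset α)))
    (hn : Fintype.card α = n) (hN : (n - 1).choose m = N) (hnd : n = 2 * m + 2 + d)
    (hm : 0 < m) (hsd : 2 * s < d) (hψ : 16 * n ^ 3 ≤ (m + s).choose m) (hNn : 64 * n ≤ N)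
    (h𝓕 : ∀ F ∈ 𝓕, (F : Set (Finset α)).Sized (m + 1) ∧ (F : Set (Finset α)).Intersecting ∧
      (∀ x, ∃ A ∈ F, x ∉ A) ∧ ∃ x, 32 * n * #{A ∈ F | x ∉ A} ≤ N) :
    #𝓕 * 2 ^ n ≤ 3 * n * 2 ^ N := by
  have hstar (x : α) : #{F ∈ 𝓕 | 32 * n * #{A ∈ F | x ∉ A} ≤ N} * 2 ^ n ≤ 3 * 2 ^ N :=
    card_mul_two_pow_le_of_near_star _ hn hN hnd hm hsd hψ hNn fun F hF ↦ by
      obtain ⟨hF𝓕, hfew⟩ := mem_filter.1 hF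
      obtain ⟨hsized, hF, hx, -⟩ := h𝓕 F hF𝓕
      exact ⟨hsized, hF, hx x, hfew⟩
  have hcover : 𝓕 ⊆ univ.biUnion fun x ↦ {F ∈ 𝓕 | 32 * n * #{A ∈ F | x ∉ A} ≤ N} := by
    intro F hF
    obtain ⟨-, -, -, x, hx⟩ := h𝓕 F hF
    exact mem_biUnion.2 ⟨x, mem_univ x, mem_filter.2 ⟨hF, hx⟩⟩
  calc #𝓕 * 2 ^ n ≤ (∑ x, #{F ∈ 𝓕 | 32 * n * #{A ∈ F | x ∉ A} ≤ N}) * 2 ^ n :=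
        Nat.mul_le_mul_right _ ((card_le_card hcover).trans card_biUnion_le)
    _ ≤ ∑ _x : α, 3 * 2 ^ N := by
        rw [sum_mul]
        exact sum_le_sum fun x _ ↦ hstar x
    _ = 3 * n * 2 ^ N := by
        rw [sum_const, card_univ, hn, smul_eq_mul]
        ring

theorem card_mul_two_pow_le_of_forall_exists_notMem {s d : ℕ} (𝓕 : Finset (Finset (Finset α)))
    (hn : Fintype.card α = n) (hnd : n = 2 * m + 2 + d) (hm : 0 < m) (hsd : 2 * s < d)
    (hψ : 16 * n ^ 3 ≤ (m + s).choose m)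
    (hψD : 2 ^ 20 * n ^ 16 ≤ (n - (m + 1)).choose (m + 1))
    (hN : 2 ^ 10 * n ^ 7 ≤ (n - 1).choose m)
    (h𝓕 : ∀ F ∈ 𝓕, (F : Set (Finset α)).Sized (m + 1) ∧ (F : Set (Finset α)).Intersecting ∧
      ∀ x, ∃ A ∈ F, x ∉ A) :
    #𝓕 * 2 ^ n ≤ (1 + 3 * n) * 2 ^ (n - 1).choose m := by
  have hn₀ : 0 < n := by omega
  have h64 : 64 * n ≤ (n - 1).choose m :=
    (Nat.mul_le_mul (by decide) (Nat.le_self_pow (by decide) n)).trans hN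
  set p : Finset (Finset α) → Prop :=
    fun F ↦ ∃ x, 32 * n * #{A ∈ F | x ∉ A} ≤ (n - 1).choose m
  have hnear := card_mul_two_pow_le_of_exists_near_star {F ∈ 𝓕 | p F} hn rfl hnd hm hsd hψ h64
    fun F hF ↦ by
      obtain ⟨hF𝓕, hp⟩ := mem_filter.1 hF
      obtain ⟨hsized, hF, hx⟩ := h𝓕 F hF𝓕
      exact ⟨hsized, hF, hx, hp⟩
  have hfar := card_mul_two_pow_le_of_card_fingerprint_le {F ∈ 𝓕 | ¬ p F}
    (univ.powersetCard (m + 1)) (kneserContainer (m + 1) (2 ^ 10 * n ^ 8)) (n := n)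
    (by rw [card_powersetCard, card_univ, hn]; exact Nat.choose_lt_two_pow _ _ hn₀)
    fun F hF ↦ by
      obtain ⟨hF𝓕, hp⟩ := mem_filter.1 hF
      obtain ⟨hsized, hF, -⟩ := h𝓕 F hF𝓕
      exact (exists_mul_card_filter_notMem_le_or_exists_kneserContainer hn (by omega) hψD hN
        hsized hF).resolve_left hp
  rw [← card_filter_add_card_filter_not p]
  linarith

end NontrivialIntersecting

section Asymptotics
open Finset Filter Topology

theorem choose_le_choose_of_le_half {m r a : ℕ} (hra : r ≤ a) (ha : 2 * a ≤ m) :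
    m.choose r ≤ m.choose a := by
  induction a, hra using Nat.le_induction with
  | base => exact le_rfl
  | succ a _ ih => exact (ih (by omega)).trans (Nat.choose_le_succ_of_lt_half_left (by omega))

theorem choose_le_add_choose {a b r : ℕ} (ha : r ≤ a) (hb : r ≤ b) :
    (a + b).choose r ≤ (a + b).choose a := by
  rcases le_total a b with hab | hab
  · exact choose_le_choose_of_le_half ha (by omega)
  · rw [Nat.choose_symm_add]
    exact choose_le_choose_of_le_half hb (by omega)

theorem eventually_mul_pow_le_add_choose (c r : ℕ) :
    ∀ᶠ n in atTop, ∀ a b : ℕ, r < a → r < b → n ≤ 4 * (a + b) →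
      c * n ^ r ≤ (a + b).choose a := by
  filter_upwards [eventually_ge_atTop (c * 8 ^ (r + 1) * (r + 1).factorial)]
    with n hn a b ha hb hab
  have hpow : n ^ (r + 1) ≤ 8 ^ (r + 1) * ((r + 1).factorial * (a + b).choose a) :=
    calc n ^ (r + 1) ≤ (8 * (a + b + 1 - (r + 1))) ^ (r + 1) := by gcongr; omega
      _ = 8 ^ (r + 1) * (a + b + 1 - (r + 1)) ^ (r + 1) := mul_pow _ _ _
      _ ≤ 8 ^ (r + 1) * (a + b).descFactorial (r + 1) := by
        gcongr
        exact Nat.pow_sub_le_descFactorial _ _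
      _ ≤ 8 ^ (r + 1) * ((r + 1).factorial * (a + b).choose a) := by
        rw [Nat.descFactorial_eq_factorial_mul_choose]
        gcongr
        exact choose_le_add_choose ha hb
  refine le_of_mul_le_mul_left ?_ (show 0 < 8 ^ (r + 1) * (r + 1).factorial by positivity)
  calc 8 ^ (r + 1) * (r + 1).factorial * (c * n ^ r)
      = c * 8 ^ (r + 1) * (r + 1).factorial * n ^ r := by ring
    _ ≤ n * n ^ r := by gcongr
    _ = n ^ (r + 1) := (pow_succ' n r).symm
    _ ≤ 8 ^ (r + 1) * (r + 1).factorial * (a + b).choose a := hpow.trans_eq (by ring)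

theorem eventually_one_add_three_mul_le_mul_two_pow {ε : ℝ} (hε : 0 < ε) :
    ∀ᶠ n : ℕ in atTop, 1 + 3 * (n : ℝ) ≤ ε * 2 ^ n := by
  have hlim : Tendsto (fun n : ℕ ↦ (n ^ 0 : ℝ) / 2 ^ n + 3 * (n ^ 1 / 2 ^ n)) atTop
      (𝓝 (0 + 3 * 0)) :=
    (tendsto_pow_const_div_const_pow_of_one_lt 0 one_lt_two).add
      ((tendsto_pow_const_div_const_pow_of_one_lt 1 one_lt_two).const_mul 3)
  filter_upwards [hlim.eventually_le_const (by simpa using hε)] with n hn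
  rw [← div_le_iff₀ (by positivity)]
  refine le_of_eq_of_le ?_ hn
  ring

/-- The gap `17` is what makes `(n - k).choose k` grow faster than `n ^ 16`. -/
theorem eventually_card_mul_two_pow_le :
    ∀ᶠ n in atTop, ∀ m : ℕ, 17 ≤ m → 2 * (m + 1) + 17 ≤ n →
      ∀ 𝓕 : Finset (Finset (Finset (Fin n))),
      (∀ F ∈ 𝓕, (F : Set (Finset (Fin n))).Sized (m + 1) ∧
        (F : Set (Finset (Fin n))).Intersecting ∧ ∀ x, ∃ A ∈ F, x ∉ A) →
      #𝓕 * 2 ^ n ≤ (1 + 3 * n) * 2 ^ (n - 1).choose m := by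
  filter_upwards [eventually_mul_pow_le_add_choose 16 3,
    eventually_mul_pow_le_add_choose (2 ^ 20) 16, eventually_mul_pow_le_add_choose (2 ^ 10) 7]
    with n hs hD hN m hm hmn 𝓕 h𝓕
  obtain ⟨d, hnd⟩ : ∃ d, n = 2 * m + 2 + d := Nat.exists_eq_add_of_le (by omega)
  specialize hs m ((d - 1) / 2) (by omega) (by omega) (by omega)
  specialize hD (m + 1) d (by omega) (by omega) (by omega)
  specialize hN m (m + 1 + d) (by omega) (by omega) (by omega)
  rw [show m + 1 + d = n - (m + 1) by omega] at hD
  rw [show m + (m + 1 + d) = n - 1 by omega] at hN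
  exact card_mul_two_pow_le_of_forall_exists_notMem 𝓕 (Fintype.card_fin n) hnd (by omega)
    (by omega) hs hD hN h𝓕

end Asymptotics

theorem almost_all_intersecting_families_trivial_general {ε : ℝ} (hε : 0 < ε) :
    ∃ K : ℕ, ∀ k : ℕ, K ≤ k → ∀ n : ℕ, 2 * k + 17 ≤ n →
      (Nat.card {F : Finset (Finset (Fin n)) //
          (∀ A ∈ F, A.card = k) ∧
          (∀ A ∈ F, ∀ B ∈ F, (A ∩ B).Nonempty) ∧
          ¬ ∃ x : Fin n, ∀ A ∈ F, x ∈ A} : ℝ) ≤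
        ε * 2 ^ ((n - 1).choose (k - 1)) := by
  obtain ⟨K, hK⟩ := Filter.eventually_atTop.1
    (eventually_card_mul_two_pow_le.and (eventually_one_add_three_mul_le_mul_two_pow hε))
  refine ⟨max K 18, fun k hk n hkn ↦ ?_⟩
  obtain ⟨hcard, hsmall⟩ := hK n (by omega)
  obtain ⟨m, rfl⟩ : ∃ m, k = m + 1 := ⟨k - 1, by omega⟩
  rw [Nat.card_eq_fintype_card, Fintype.card_subtype, Nat.add_sub_cancel]
  refine le_of_mul_le_mul_right ?_ (show (0 : ℝ) < 2 ^ n by positivity)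
  calc _ ≤ (1 + 3 * (n : ℝ)) * 2 ^ (n - 1).choose m := by
        refine mod_cast hcard m (by omega) hkn _ fun F hF ↦ ?_
        obtain ⟨hsized, hF, hx⟩ := (Finset.mem_filter.1 hF).2
        push Not at hx
        exact ⟨fun _ ↦ hsized _, fun A hA B hB ↦ Finset.not_disjoint_iff_nonempty_inter.2
          (hF A hA B hB), hx⟩
    _ ≤ ε * 2 ^ n * 2 ^ (n - 1).choose m := by gcongr
    _ = ε * 2 ^ (n - 1).choose m * 2 ^ n := by ring

/-- For every ε > 0 there exists K such that for all k ≥ K and all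
integers n ≥ 2k + 100·ln k, the number of non-trivial intersecting families of
k-element subsets of [n] is at most ε · 2^(C(n-1,k-1)). -/
theorem almost_all_intersecting_families_trivial :
    ∀ ε : ℝ, 0 < ε → ∃ K : ℕ, ∀ k : ℕ, K ≤ k → ∀ n : ℕ,
      (2 * k + 100 * Real.log k : ℝ) ≤ n →
      (Nat.card {F : Finset (Finset (Fin n)) //
          (∀ A ∈ F, A.card = k) ∧
          (∀ A ∈ F, ∀ B ∈ F, (A ∩ B).Nonempty) ∧
          ¬ ∃ x : Fin n, ∀ A ∈ F, x ∈ A} : ℝ) ≤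
        ε * 2 ^ ((n - 1).choose (k - 1)) := by
  intro ε hε
  obtain ⟨K, hK⟩ := almost_all_intersecting_families_trivial_general hε
  refine ⟨max K 2, fun k hk n hn ↦ hK k (le_of_max_le_left hk) n ?_⟩
  have hlog : Real.log 2 ≤ Real.log k :=
    Real.log_le_log two_pos (by exact_mod_cast le_of_max_le_right hk)
  have hgap : (2 * k + 17 : ℝ) ≤ n := by linarith [Real.log_two_gt_d9]
  exact_mod_cast hgap
end

section
/- There exists K such that the following holds for all k ≥ K. Let 1 ≤ r ≤ 2+2√(k·ln k), n = 2k+r, and d = \binom{k+r-1}{k-1}. Let A be a family of (k+r−1)-element subsets of [n−1] and let N(A) be the family of all (k−1)-element subsets of [n−1] contained in some member of A. If |A| ≤ d³, then |N(A)| ≥ d·|A|/(5e)^r. -/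
/-!
Write `q = k - 1`, so that members of the family have `q + r` elements, and put `m = q + 5r`. Once
`r` is small compared with `k`, the bound `d³` is at most `m.choose (q + r)`. By Kruskal–Katona, `A`
may then be replaced by an initial segment of the colexicographic order of the same size, and this
segment lives on the first `m` points. There a double count suffices: every member contains `d` sets
of size `q`, while a set of size `q` lies in at most `(5r).choose r ≤ (5e)^r` members. Assuming
`|A| ≤ d ^ s` instead, the same argument with `m = q + (s + 2)r` gives `(s + 2)e` in place of `5e`.
-/

section Shadow

open Finset Finset.Colex
open scoped FinsetFamily

variable {α β : Type*} {m n q r s : ℕ}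

theorem biUnion_powersetCard_eq_shadow_iterate [DecidableEq α] {A : Finset (Finset α)}
    (hA : (A : Set (Finset α)).Sized (q + r)) :
    (A.biUnion fun S => powersetCard q S) = ∂^[r] A := by
  ext T
  simp only [mem_biUnion, mem_powersetCard, mem_shadow_iterate_iff_exists_mem_card_add]
  refine exists_congr fun S => and_congr_right fun hS => and_congr_right fun _ => ?_
  rw [hA hS, add_left_inj, eq_comm]

theorem card_filter_superset_le_choose [DecidableEq α] {A : Finset (Finset α)} {R T : Finset α}
    (hA : A ⊆ powersetCard (#T + r) R) (hT : T ⊆ R) :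
    #{S ∈ A | T ⊆ S} ≤ (#R - #T).choose r := by
  rw [← card_sdiff_of_subset hT, ← card_powersetCard]
  refine card_le_card_of_injOn (· \ T) (fun S hS => ?_) fun S hS S' hS' h => ?_
  · obtain ⟨hSA, hTS⟩ := mem_filter.1 hS
    obtain ⟨hSR, hScard⟩ := mem_powersetCard.1 (hA hSA)
    refine mem_powersetCard.2 ⟨sdiff_subset_sdiff hSR Subset.rfl, ?_⟩
    rw [card_sdiff_of_subset hTS, hScard, Nat.add_sub_cancel_left]
  · rw [← sdiff_union_of_subset (mem_filter.1 hS).2, ← sdiff_union_of_subset (mem_filter.1 hS').2]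
    exact congrArg (· ∪ T) h

theorem card_mul_choose_le_shadow_of_subset_powersetCard [DecidableEq α] {A : Finset (Finset α)}
    {R : Finset α} (hA : A ⊆ powersetCard (q + r) R) :
    #A * (q + r).choose q ≤ #(∂^[r] A) * (#R - q).choose r := by
  have hsized : (A : Set (Finset α)).Sized (q + r) := fun S hS => (mem_powersetCard.1 (hA hS)).2
  rw [← biUnion_powersetCard_eq_shadow_iterate hsized]
  refine card_mul_le_card_mul (fun S T => T ⊆ S) (fun S hS => ?_) fun T hT => ?_
  · rw [← hsized hS, ← card_powersetCard]
    exact card_le_card fun T hT => (mem_bipartiteAbove _).2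
      ⟨mem_biUnion.2 ⟨S, hS, hT⟩, (mem_powersetCard.1 hT).1⟩
  · obtain ⟨S, hS, hTmem⟩ := mem_biUnion.1 hT
    obtain ⟨hTS, rfl⟩ := mem_powersetCard.1 hTmem
    exact card_filter_superset_le_choose hA (hTS.trans (mem_powersetCard.1 (hA hS)).1)

section Colex

variable [LinearOrder α] {P : Finset (Finset α)}

theorem isInitSeg_erase {M : Finset α} (hP : IsInitSeg P s)
    (hM : ∀ S ∈ P, toColex S ≤ toColex M) : IsInitSeg (P.erase M) s := by
  refine ⟨hP.1.mono (by simp), fun S T hS hT => mem_erase.2 ⟨?_, hP.2 (mem_of_mem_erase hS) hT⟩⟩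
  rintro rfl
  exact (hM S (mem_of_mem_erase hS)).not_gt hT.1

theorem exists_subset_isInitSeg_card_eq (hP : IsInitSeg P s) {c : ℕ} (hc : c ≤ #P) :
    ∃ C ⊆ P, IsInitSeg C s ∧ #C = c := by
  induction hc using Nat.decreasingInduction with
  | self => exact ⟨P, Subset.rfl, hP, rfl⟩
  | of_succ c _ ih =>
    obtain ⟨C, hCP, hC, hcard⟩ := ih
    obtain ⟨M, hM, hmax⟩ := exists_max_image C toColex (card_pos.1 (by omega))
    refine ⟨C.erase M, (erase_subset _ _).trans hCP, isInitSeg_erase hC hmax, ?_⟩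
    rw [card_erase_of_mem hM, hcard, Nat.add_sub_cancel]

theorem isInitSeg_powersetCard_Iio [LocallyFiniteOrderBot α] (a : α) :
    IsInitSeg (powersetCard s (Iio a)) s := by
  refine ⟨Set.sized_powersetCard _ _, fun S T hS hT => mem_powersetCard.2 ⟨?_, hT.2⟩⟩
  have hSa : ∀ x ∈ S, x < a := fun x hx => mem_Iio.1 ((mem_powersetCard.1 hS).1 hx)
  exact fun x hx => mem_Iio.2 (forall_lt_mono hT.1.le hSa x hx)

end Colex

theorem card_mul_choose_le_shadow_of_card_le_choose_fin {A : Finset (Finset (Fin n))}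
    (hA : (A : Set (Finset (Fin n))).Sized (q + r)) (hcard : #A ≤ m.choose (q + r)) :
    #A * (q + r).choose q ≤ #(∂^[r] A) * (m - q).choose r := by
  obtain hnm | hmn := le_or_gt n m
  · have hsub : A ⊆ powersetCard (q + r) univ :=
      fun S hS => mem_powersetCard.2 ⟨subset_univ S, hA hS⟩
    refine (card_mul_choose_le_shadow_of_subset_powersetCard hsub).trans ?_
    rw [card_fin]
    gcongr
  · set R : Finset (Fin n) := Iio ⟨m, hmn⟩
    have hR : #R = m := Fin.card_Iio _
    obtain ⟨C, hCR, hC, hCA⟩ := exists_subset_isInitSeg_card_eq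
      (isInitSeg_powersetCard_Iio (s := q + r) (⟨m, hmn⟩ : Fin n)) (c := #A)
      (by rwa [card_powersetCard, hR])
    calc #A * (q + r).choose q = #C * (q + r).choose q := by rw [hCA]
      _ ≤ #(∂^[r] C) * (m - q).choose r := hR ▸ card_mul_choose_le_shadow_of_subset_powersetCard hCR
      _ ≤ #(∂^[r] A) * (m - q).choose r := Nat.mul_le_mul_right _ (iterated_kk hA hCA.le hC)

theorem shadow_map [DecidableEq α] [DecidableEq β] (f : β ↪ α) (B : Finset (Finset β)) :
    ∂ (B.map (mapEmbedding f).toEmbedding) = (∂ B).map (mapEmbedding f).toEmbedding := by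
  ext T
  simp [mem_shadow_iff, ← map_erase, and_assoc]

theorem shadow_iterate_map [DecidableEq α] [DecidableEq β] (f : β ↪ α) (B : Finset (Finset β)) :
    ∂^[r] (B.map (mapEmbedding f).toEmbedding) = (∂^[r] B).map (mapEmbedding f).toEmbedding :=
  (Function.Semiconj.iterate_right (f := Finset.map (mapEmbedding f).toEmbedding)
    (fun B => (shadow_map f B).symm) r B).symm

theorem exists_map_fin_eq (A : Finset (Finset α)) :
    ∃ (n : ℕ) (f : Fin n ↪ α) (B : Finset (Finset (Fin n))),
      B.map (mapEmbedding f).toEmbedding = A := by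
  classical
  let f := (A.sup id).equivFin.symm.toEmbedding.trans (Function.Embedding.subtype _)
  have hA : A ⊆ univ.map (mapEmbedding f).toEmbedding := by
    intro S hS
    have hSf : S ⊆ univ.map f := fun x hx => by
      have hx' : x ∈ A.sup id := le_sup (f := id) hS hx
      exact mem_map.2 ⟨(A.sup id).equivFin ⟨x, hx'⟩, mem_univ _, by simp [f]⟩
    obtain ⟨T, -, rfl⟩ := subset_map_iff.1 hSf
    exact mem_map.2 ⟨T, mem_univ _, rfl⟩
  obtain ⟨B, -, hB⟩ := subset_map_iff.1 hA
  exact ⟨_, f, B, hB.symm⟩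

theorem card_mul_choose_le_shadow_of_card_le_choose [DecidableEq α] {A : Finset (Finset α)}
    (hA : (A : Set (Finset α)).Sized (q + r)) (hcard : #A ≤ m.choose (q + r)) :
    #A * (q + r).choose q ≤ #(∂^[r] A) * (m - q).choose r := by
  obtain ⟨n, f, B, rfl⟩ := exists_map_fin_eq A
  rw [card_map] at hcard
  rw [shadow_iterate_map, card_map, card_map]
  refine card_mul_choose_le_shadow_of_card_le_choose_fin (fun S hS => ?_) hcard
  simpa using hA (mem_map_of_mem (mapEmbedding f).toEmbedding hS)

end Shadow

section Binomial

open scoped Nat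

theorem choose_mul_le_mul_exp_pow (c r : ℕ) :
    ((c * r).choose r : ℝ) ≤ (c * Real.exp 1) ^ r :=
  calc ((c * r).choose r : ℝ) ≤ ((c * r : ℕ) : ℝ) ^ r / r ! := Nat.choose_le_pow_div r (c * r)
    _ = c ^ r * ((r : ℝ) ^ r / r !) := by rw [Nat.cast_mul, mul_pow, mul_div_assoc]
    _ ≤ c ^ r * Real.exp r := by
      gcongr
      exact Real.pow_div_factorial_le_exp _ r.cast_nonneg r
    _ = (c * Real.exp 1) ^ r := by rw [mul_pow, ← Real.exp_nat_mul, mul_one]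

theorem factorial_mul_le_pow_mul_factorial_pow (s r : ℕ) : (s * r)! ≤ s ^ (s * r) * r ! ^ s := by
  induction r with
  | zero => simp
  | succ r ih =>
    calc (s * (r + 1))! = (s * r)! * (s * r + 1).ascFactorial s :=
          (Nat.factorial_mul_ascFactorial (s * r) s).symm
      _ ≤ (s ^ (s * r) * r ! ^ s) * (s * r + s) ^ s := by
        gcongr
        exact Nat.ascFactorial_le_pow_add _ _
      _ = s ^ (s * (r + 1)) * (r + 1)! ^ s := by
        rw [← mul_add_one, Nat.factorial_succ, mul_pow, mul_pow]
        ring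

theorem choose_mul_factorial_le_pow (n r : ℕ) : n.choose r * r ! ≤ n ^ r := by
  rw [mul_comm, ← Nat.descFactorial_eq_factorial_mul_choose]
  exact Nat.descFactorial_le_pow _ _

theorem pow_le_add_choose_mul_factorial (n r : ℕ) : n ^ r ≤ (n + r).choose r * r ! := by
  rw [mul_comm, ← Nat.ascFactorial_eq_factorial_mul_choose]
  exact (Nat.pow_le_pow_left n.le_succ r).trans (Nat.pow_succ_le_ascFactorial _ _)

-- The two sides are roughly `N^(sr) / r!^s` and `N^((s+1)r) / ((s+1)r)!`: the extra factor `N^r` on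
-- the right has to absorb the quotient of factorials, which is at most `((s+1)^(s+1) * r)^r`.
theorem choose_pow_le_add_mul_choose {s r N : ℕ} (h : (s + 1) ^ (s + 1) * r ≤ N) :
    N.choose r ^ s ≤ (N + (s + 1) * r).choose ((s + 1) * r) := by
  have hfactorial : ((s + 1) * r)! ≤ N ^ r * r ! ^ s :=
    calc ((s + 1) * r)! ≤ (s + 1) ^ ((s + 1) * r) * r ! ^ (s + 1) :=
          factorial_mul_le_pow_mul_factorial_pow (s + 1) r
      _ = ((s + 1) ^ (s + 1)) ^ r * r ! * r ! ^ s := by rw [pow_mul]; ring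
      _ ≤ ((s + 1) ^ (s + 1)) ^ r * r ^ r * r ! ^ s := by
        gcongr
        exact Nat.factorial_le_pow r
      _ = ((s + 1) ^ (s + 1) * r) ^ r * r ! ^ s := by rw [mul_pow _ r r]
      _ ≤ N ^ r * r ! ^ s := by gcongr
  have hpos : 0 < ((s + 1) * r)! * r ! ^ s := by positivity
  refine Nat.le_of_mul_le_mul_right ?_ hpos
  calc N.choose r ^ s * (((s + 1) * r)! * r ! ^ s)
      = (N.choose r * r !) ^ s * ((s + 1) * r)! := by ring
    _ ≤ (N ^ r) ^ s * (N ^ r * r ! ^ s) := by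
      gcongr
      exact choose_mul_factorial_le_pow N r
    _ = N ^ ((s + 1) * r) * r ! ^ s := by ring
    _ ≤ (N + (s + 1) * r).choose ((s + 1) * r) * ((s + 1) * r)! * r ! ^ s := by
      gcongr
      exact pow_le_add_choose_mul_factorial _ _
    _ = (N + (s + 1) * r).choose ((s + 1) * r) * (((s + 1) * r)! * r ! ^ s) := mul_assoc _ _ _

end Binomial

section Asymptotics

open Filter Asymptotics

theorem isLittleO_sqrt_mul_log_id :
    (fun x : ℝ => √(x * Real.log x)) =o[atTop] (id : ℝ → ℝ) := by
  have hsq : (fun x : ℝ => x * Real.log x) =o[atTop] fun x => id x ^ 2 := by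
    simpa only [id, sq] using
      (isBigO_refl (id : ℝ → ℝ) atTop).mul_isLittleO Real.isLittleO_log_id_atTop
  refine IsLittleO.of_pow (hsq.congr' ?_ EventuallyEq.rfl) two_ne_zero
  filter_upwards [eventually_ge_atTop 1] with x hx
  exact (Real.sq_sqrt (mul_nonneg (by linarith) (Real.log_nonneg hx))).symm

theorem eventually_mul_le_of_le_sqrt_mul_log {C : ℝ} (hC : 0 < C) (a b : ℝ) :
    ∀ᶠ x : ℝ in atTop, ∀ y ≤ a + b * √(x * Real.log x), C * y ≤ x := by
  have hlittle : (fun x : ℝ => a + b * √(x * Real.log x)) =o[atTop] (id : ℝ → ℝ) :=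
    (isLittleO_const_id_atTop a).add (isLittleO_sqrt_mul_log_id.const_mul_left b)
  filter_upwards [hlittle.bound (inv_pos.2 hC), eventually_ge_atTop 0] with x hx hx0 y hy
  rw [Real.norm_eq_abs, id, Real.norm_of_nonneg hx0] at hx
  rw [← le_inv_mul_iff₀ hC]
  exact hy.trans ((le_abs_self _).trans hx)

end Asymptotics

open Finset in
theorem isoperimetry_shadow_ii_general {α : Type*} [DecidableEq α] {q r s : ℕ}
    (hr : (s + 1) ^ (s + 1) * r ≤ q + r) {A : Finset (Finset α)} (hA : ∀ S ∈ A, #S = q + r)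
    (hcard : #A ≤ (q + r).choose q ^ s) :
    ((q + r).choose q : ℝ) * #A / ((s + 2 : ℕ) * Real.exp 1) ^ r ≤
      #(A.biUnion fun S => powersetCard q S) := by
  have hchoose : #A ≤ (q + r + (s + 1) * r).choose (q + r) := by
    rw [Nat.choose_symm_add] at hcard ⊢
    exact hcard.trans (choose_pow_le_add_mul_choose hr)
  have hcount := card_mul_choose_le_shadow_of_card_le_choose hA hchoose
  have hcodim : q + r + (s + 1) * r - q = (s + 2) * r := by
    rw [add_assoc, Nat.add_sub_cancel_left]
    ring
  rw [hcodim, ← biUnion_powersetCard_eq_shadow_iterate hA] at hcount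
  rw [div_le_iff₀ (by positivity), mul_comm]
  calc (#A : ℝ) * (q + r).choose q
      ≤ #(A.biUnion fun S => powersetCard q S) * ((s + 2) * r).choose r := mod_cast hcount
    _ ≤ #(A.biUnion fun S => powersetCard q S) * ((s + 2 : ℕ) * Real.exp 1) ^ r := by
      gcongr
      exact choose_mul_le_mul_exp_pow _ _

/-- Isoperimetry (ii). There is K such that for all k ≥ K,
1 ≤ r ≤ 2+2√(k ln k), n = 2k+r and d = C(k+r-1,k-1): any family A of
(k+r-1)-subsets of [n-1] with |A| ≤ d³ satisfies |N(A)| ≥ d·|A|/(5e)^r,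
where N(A) is the (k-1)-shadow of A. -/
theorem isoperimetry_shadow_ii : ∃ K : ℕ, ∀ k : ℕ, K ≤ k → ∀ r n : ℕ,
    1 ≤ r → ((r : ℝ) ≤ 2 + 2 * Real.sqrt (k * Real.log k)) → n = 2 * k + r →
    ∀ A : Finset (Finset (Fin (n - 1))), (∀ S ∈ A, S.card = k + r - 1) →
    A.card ≤ ((k + r - 1).choose (k - 1)) ^ 3 →
    ((k + r - 1).choose (k - 1) : ℝ) * A.card / (5 * Real.exp 1) ^ r ≤
      ((A.biUnion fun S => Finset.powersetCard (k - 1) S).card : ℝ) := by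
  obtain ⟨K, hK⟩ := Filter.eventually_atTop.1 <| tendsto_natCast_atTop_atTop.eventually <|
    eventually_mul_le_of_le_sqrt_mul_log (C := 256) (by norm_num) 2 2
  refine ⟨K, fun k hk r n hr hrk _ A hA hcard => ?_⟩
  have hkr : 256 * r ≤ k := mod_cast hK k hk r hrk
  have hsize : k + r - 1 = k - 1 + r := by omega
  rw [hsize] at hA hcard ⊢
  exact isoperimetry_shadow_ii_general (s := 3) (by omega) hA hcard
end
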